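/- arXiv:2311.06387 — 2 statements merged into one kernel-verified Lean document; each statement's English description precedes it below -/
import Mathlib

section
/- Let k be a field, n ≥ 1, and let (E, α) be an oriented signed graph on vertex set {1,…,n}. Let φ : k[U_e : e ∈ E] → k[t_1^{±1}, …, t_n^{±1}] be the k-algebra homomorphism sending U_e to the Laurent monomial t^{α_e} = t_1^{(α_e)_1} ⋯ t_n^{(α_e)_n}. Then the toric ideal ker φ is generated, as an ideal of k[U_e : e ∈ E], by the cycle binomials U(C) of those cycles C of the signed covering of (E, α) that are not fixed orientation-wise by the involution. Moreover the cycle binomial of every cycle that is fixed orientation-wise by the involution equals zero, so ker φ is equally generated by the cycle binomials of all cycles of the signed covering. -/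
open scoped Classical

noncomputable section

/-- Signed index set `±[n]`: `(true, i)` represents `+i`, `(false, i)` represents `-i`. -/
abbrev SIdx (n : ℕ) := Bool × Fin n

/-- Negation `a ↦ -a` on `±[n]`. -/
def negS {n : ℕ} (a : SIdx n) : SIdx n := (!a.1, a.2)

/-- Negation on `±[n] ∪ {0}`, fixing `0`. -/
def negO {n : ℕ} : Option (SIdx n) → Option (SIdx n)
  | none => none
  | some a => some (negS a)

/-- Standard basis vector `e_i` of `ℤ^n`. -/
def stdZ (n : ℕ) (i : Fin n) : Fin n → ℤ := Pi.single i 1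

/-- `zsgn true = 1`, `zsgn false = -1`. -/
def zsgn (s : Bool) : ℤ := if s then 1 else -1

/-- `v` on `±[n] ∪ {0}` with values in `ℤ^n`: `v(±i) = ±e_i`, `v(0) = 0`. -/
def vZ {n : ℕ} : Option (SIdx n) → (Fin n → ℤ)
  | none => 0
  | some a => zsgn a.1 • stdZ n a.2

/-- The allowed shapes for the vector of an edge of an oriented signed graph:
a link `±e_i ± e_j` (`i ≠ j`), a negative loop `±2e_i`, a half edge `±e_i`,
or `0` (a positive loop). -/
def IsOSGVec (n : ℕ) (x : Fin n → ℤ) : Prop :=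
  (∃ i j : Fin n, i ≠ j ∧ ∃ s t : Bool, x = zsgn s • stdZ n i + zsgn t • stdZ n j) ∨
  (∃ i : Fin n, ∃ s : Bool, x = (2 * zsgn s) • stdZ n i) ∨
  (∃ i : Fin n, ∃ s : Bool, x = zsgn s • stdZ n i) ∨ x = 0

/-- The arcs of the signed covering of the oriented signed graph `(E, α)` (with `ℓ e` the
distinguished vertex of a positive loop `e`): for `α e ≠ 0`, all pairs `(a, b)` with
`v(a) - v(b) = α e`; for a positive loop, the two self-loops at `±ℓ e`. -/
def Arc {n : ℕ} {E : Type} (α : E → (Fin n → ℤ)) (ℓ : E → Fin n) (e : E)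
    (a b : Option (SIdx n)) : Prop :=
  (α e ≠ 0 ∧ vZ a - vZ b = α e) ∨ (α e = 0 ∧ ∃ s : Bool, a = some (s, ℓ e) ∧ b = a)

/-- A cycle of the signed covering: pairwise distinct vertices `a_0, …, a_len` cyclically
arranged, edges `e_0, …, e_len` and signs `σ_0, …, σ_len`, where the `k`-th edge joins
`a_k` to `a_{k+1}` (indices mod `len + 1`), traversed forwards if `σ_k = +` and
backwards if `σ_k = -`. -/
structure SCycle (n : ℕ) (E : Type) (α : E → (Fin n → ℤ)) (ℓ : E → Fin n) where
  len : ℕ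
  vtx : Fin (len + 1) → Option (SIdx n)
  edg : Fin (len + 1) → E
  sg : Fin (len + 1) → Bool
  inj : Function.Injective vtx
  valid : ∀ m : Fin (len + 1),
    if sg m then Arc α ℓ (edg m) (vtx m) (vtx (m + 1))
    else Arc α ℓ (edg m) (vtx (m + 1)) (vtx m)

/-- The cycle binomial `U(C) = ∏_{σ_k = +} U_{e_k} - ∏_{σ_k = -} U_{e_k}`. -/
def cycBin {n : ℕ} {E : Type} {α : E → (Fin n → ℤ)} {ℓ : E → Fin n}
    (k : Type) [Field k] (C : SCycle n E α ℓ) : MvPolynomial E k :=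
  (∏ m ∈ Finset.univ.filter (fun m => C.sg m = true), MvPolynomial.X (C.edg m)) -
    ∏ m ∈ Finset.univ.filter (fun m => C.sg m = false), MvPolynomial.X (C.edg m)

/-- `C` is fixed orientation-wise by the involution: its negation `ι(C)` (negated vertices,
same edges, reversed signs) coincides with `C` after a cyclic rotation of the starting
point. -/
def FixedInv {n : ℕ} {E : Type} {α : E → (Fin n → ℤ)} {ℓ : E → Fin n}
    (C : SCycle n E α ℓ) : Prop :=
  ∃ r : Fin (C.len + 1), ∀ m : Fin (C.len + 1),
    C.vtx (m + r) = negO (C.vtx m) ∧ C.edg (m + r) = C.edg m ∧ C.sg (m + r) = !C.sg m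

/-- The `k`-algebra map `φ : k[U_e : e ∈ E] → k[t_1^{±1}, …, t_n^{±1}]`, `U_e ↦ t^{α_e}`. -/
def laurentHom (n : ℕ) (k : Type) [Field k] (E : Type) (α : E → (Fin n → ℤ)) :
    MvPolynomial E k →ₐ[k] AddMonoidAlgebra k (Fin n →₀ ℤ) :=
  MvPolynomial.aeval (fun e =>
    AddMonoidAlgebra.single (Finsupp.equivFunOnFinite.symm (α e)) 1)

/-- The signed weight of a multiset of signed edges. -/
def wtM {n : ℕ} {E : Type} (α : E → (Fin n → ℤ)) (M : Multiset (Bool × E)) : Fin n → ℤ :=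
  (M.map fun p => zsgn p.1 • α p.2).sum

/-- The monomial of the edges of sign `b`. -/
def monM {E : Type} (k : Type) [Field k] (b : Bool) (M : Multiset (Bool × E)) :
    MvPolynomial E k :=
  ((M.filter (fun p => p.1 = b)).map fun p => MvPolynomial.X p.2).prod

/-- The multiset of signed edges of a cycle. -/
def cycM {n : ℕ} {E : Type} {α : E → (Fin n → ℤ)} {ℓ : E → Fin n} (C : SCycle n E α ℓ) :
    Multiset (Bool × E) :=
  (Finset.univ : Finset (Fin (C.len + 1))).val.map fun m => (C.sg m, C.edg m)

lemma wtM_add {n : ℕ} {E : Type} (α : E → (Fin n → ℤ)) (M N : Multiset (Bool × E)) :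
    wtM α (M + N) = wtM α M + wtM α N := by simp [wtM]

lemma monM_add {E : Type} (k : Type) [Field k] (b : Bool) (M N : Multiset (Bool × E)) :
    monM k b (M + N) = monM k b M * monM k b N := by simp [monM]

lemma cycBin_eq {n : ℕ} {E : Type} {α : E → (Fin n → ℤ)} {ℓ : E → Fin n}
    (k : Type) [Field k] (C : SCycle n E α ℓ) :
    cycBin k C = monM k true (cycM C) - monM k false (cycM C) := by
  have h : ∀ b, ∏ m ∈ Finset.univ.filter (fun m => C.sg m = b),
      (MvPolynomial.X (C.edg m) : MvPolynomial E k) = monM k b (cycM C) := by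
    intro b
    simp only [monM, cycM, Multiset.filter_map, Multiset.map_map]
    rfl
  rw [cycBin, h, h]

lemma arc_sub {n : ℕ} {E : Type} {α : E → (Fin n → ℤ)} {ℓ : E → Fin n} {e : E}
    {a b : Option (SIdx n)} (h : Arc α ℓ e a b) : α e = vZ a - vZ b := by
  rcases h with ⟨_, h⟩ | ⟨h, s, rfl, rfl⟩
  · exact h.symm
  · simp [h]

lemma wt_cyc {n : ℕ} {E : Type} {α : E → (Fin n → ℤ)} {ℓ : E → Fin n}
    (C : SCycle n E α ℓ) : wtM α (cycM C) = 0 := by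
  have h1 : wtM α (cycM C) = ∑ m, zsgn (C.sg m) • α (C.edg m) := by
    simp only [wtM, cycM, Multiset.map_map]
    rfl
  have h2 : ∀ m, zsgn (C.sg m) • α (C.edg m) = vZ (C.vtx m) - vZ (C.vtx (m + 1)) := by
    intro m
    have := C.valid m
    cases hs : C.sg m
    · have h3 : Arc α ℓ (C.edg m) (C.vtx (m + 1)) (C.vtx m) := by simpa [hs] using this
      rw [arc_sub h3]
      simp [zsgn]
    · have h3 : Arc α ℓ (C.edg m) (C.vtx m) (C.vtx (m + 1)) := by simpa [hs] using this
      rw [arc_sub h3]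
      simp [zsgn]
  rw [h1, Finset.sum_congr rfl (fun m _ => h2 m), Finset.sum_sub_distrib, sub_eq_zero]
  exact (Equiv.sum_comp (Equiv.addRight (1 : Fin (C.len + 1))) (fun m => vZ (C.vtx m))).symm

lemma fixed_zero {n : ℕ} {E : Type} {α : E → (Fin n → ℤ)} {ℓ : E → Fin n}
    (k : Type) [Field k] (C : SCycle n E α ℓ) (h : FixedInv C) : cycBin k C = 0 := by
  obtain ⟨r, hr⟩ := h
  rw [cycBin, sub_eq_zero]
  refine Finset.prod_bij (fun m _ => m + r) ?_ ?_ ?_ ?_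
  · intro m hm
    simpa [(hr m).2.2] using hm
  · intro a _ b _ hab
    simpa using hab
  · intro b hb
    refine ⟨b - r, ?_, by simp⟩
    have := (hr (b - r)).2.2
    simp only [sub_add_cancel] at this
    simp only [Finset.mem_filter, Finset.mem_univ, true_and] at hb ⊢
    rw [hb] at this
    simpa using this.symm
  · intro m _
    rw [(hr m).2.1]

lemma osg_sgn {n : ℕ} {x : Fin n → ℤ} (s : Bool) (h : IsOSGVec n x) :
    IsOSGVec n (zsgn s • x) := by
  cases s
  · have hz : ∀ s, zsgn (!s) = - zsgn s := by intro s; cases s <;> rfl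
    have e : zsgn false • x = -x := by simp [zsgn]
    rw [e]
    rcases h with ⟨i, j, hij, s, t, rfl⟩ | ⟨i, s, rfl⟩ | ⟨i, s, rfl⟩ | rfl
    · refine Or.inl ⟨i, j, hij, !s, !t, ?_⟩
      rw [hz, hz, neg_smul, neg_smul]; abel
    · refine Or.inr (Or.inl ⟨i, !s, ?_⟩)
      rw [hz, mul_neg, neg_smul]
    · refine Or.inr (Or.inr (Or.inl ⟨i, !s, ?_⟩))
      rw [hz, neg_smul]
    · exact Or.inr (Or.inr (Or.inr (by simp)))
  · simpa [zsgn] using h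

lemma zsgn_not (s : Bool) : zsgn (!s) = - zsgn s := by cases s <;> rfl

lemma osg_next {n : ℕ} {x : Fin n → ℤ} (h : IsOSGVec n x) (t : Bool) (i : Fin n)
    (hp : 0 < zsgn t * x i) : ∃ b : Option (SIdx n), vZ (some (t, i)) - vZ b = x := by
  rcases h with ⟨p, q, hpq, s, s', rfl⟩ | ⟨p, s, rfl⟩ | ⟨p, s, rfl⟩ | rfl
  · by_cases hi : i = p
    · subst hi
      have : t = s := by
        have hq : stdZ n q i = 0 := by simp [stdZ, hpq]
        simp only [Pi.add_apply, Pi.smul_apply, hq] at hp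
        cases t <;> cases s <;> simp_all [zsgn, stdZ]
      subst this
      exact ⟨some (!s', q), by simp only [vZ, zsgn_not, neg_smul, sub_neg_eq_add]⟩
    · by_cases hj : i = q
      · subst hj
        have : t = s' := by
          have hq : stdZ n p i = 0 := by simp [stdZ, hi]
          simp only [Pi.add_apply, Pi.smul_apply, hq] at hp
          cases t <;> cases s' <;> simp_all [zsgn, stdZ]
        subst this
        exact ⟨some (!s, p), by
          simp only [vZ, zsgn_not, neg_smul, sub_neg_eq_add]; rw [add_comm]⟩
      · exfalso
        simp [stdZ, Pi.single_apply, hi, hj] at hp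
  · by_cases hi : i = p
    · subst hi
      have : t = s := by
        cases t <;> cases s <;> simp_all [zsgn, stdZ, Pi.single_apply]
      subst this
      exact ⟨some (!t, i), by
        simp only [vZ, zsgn_not, neg_smul, sub_neg_eq_add]; rw [← add_smul, two_mul]⟩
    · exfalso
      simp [stdZ, Pi.single_apply, hi] at hp
  · by_cases hi : i = p
    · subst hi
      have : t = s := by
        cases t <;> cases s <;> simp_all [zsgn, stdZ, Pi.single_apply]
      subst this
      exact ⟨none, by simp [vZ]⟩
    · exfalso
      simp [stdZ, Pi.single_apply, hi] at hp
  · simp at hp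

lemma sum_stdZ {n : ℕ} (c : ℤ) (p : Fin n) : ∑ i, (c • stdZ n p) i = c := by
  simp [stdZ, Pi.single_apply]

lemma osg_odd {n : ℕ} {x : Fin n → ℤ} (h : IsOSGVec n x)
    (hp : ¬ Even (∑ i, x i)) : ∃ b : Option (SIdx n), vZ none - vZ b = x := by
  rcases h with ⟨p, q, hpq, s, s', rfl⟩ | ⟨p, s, rfl⟩ | ⟨p, s, rfl⟩ | rfl
  · exfalso
    apply hp
    simp only [Pi.add_apply, Finset.sum_add_distrib, sum_stdZ]
    cases s <;> cases s' <;> simp [zsgn]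
  · exfalso
    apply hp
    rw [sum_stdZ]
    simp
  · exact ⟨some (!s, p), by simp only [vZ, zsgn_not, neg_smul, sub_neg_eq_add, zero_add]⟩
  · simp at hp

lemma osg_start {n : ℕ} {x : Fin n → ℤ} (h : IsOSGVec n x) :
    ∃ a b : Option (SIdx n), vZ a - vZ b = x := by
  rcases h with ⟨p, q, hpq, s, s', rfl⟩ | ⟨p, s, rfl⟩ | ⟨p, s, rfl⟩ | rfl
  · exact ⟨some (s, p), some (!s', q), by simp only [vZ, zsgn_not, neg_smul, sub_neg_eq_add]⟩
  · exact ⟨some (s, p), some (!s, p), by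
        simp only [vZ, zsgn_not, neg_smul, sub_neg_eq_add]; rw [← add_smul, two_mul]⟩
  · exact ⟨some (s, p), none, by simp [vZ]⟩
  · exact ⟨none, none, by simp⟩

lemma next_step {n : ℕ} {E : Type} (α : E → (Fin n → ℤ)) (hOSG : ∀ e : E, IsOSGVec n (α e))
    (R : Multiset (Bool × E)) (a c : Option (SIdx n)) (hac : a ≠ c)
    (hR : wtM α R = vZ a - vZ c) :
    ∃ p ∈ R, ∃ b, vZ a - vZ b = zsgn p.1 • α p.2 := by
  rcases a with _ | ⟨t, i⟩
  · rcases c with _ | ⟨t, i⟩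
    · exact absurd rfl hac
    · by_contra hcon
      push Not at hcon
      have hev : ∀ p ∈ R, Even (∑ j, (zsgn p.1 • α p.2) j) := by
        intro p hp
        by_contra hodd
        obtain ⟨b, hb⟩ := osg_odd (osg_sgn p.1 (hOSG p.2)) hodd
        exact hcon p hp b hb
      have hall : Even (∑ j, wtM α R j) := by
        have key : ∀ S : Multiset (Bool × E), S ≤ R → Even (∑ j, wtM α S j) := by
          intro S
          induction S using Multiset.induction_on with
          | empty => intro _; simp [wtM]
          | cons p S ih =>
            intro hS
            have h1 := ih ((Multiset.le_cons_self S p).trans hS)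
            have h2 := hev p (Multiset.mem_of_le hS (Multiset.mem_cons_self p S))
            have : wtM α (p ::ₘ S) = zsgn p.1 • α p.2 + wtM α S := by simp [wtM]
            rw [this]
            simp only [Pi.add_apply, Finset.sum_add_distrib]
            exact h2.add h1
        exact key R le_rfl
      rw [hR] at hall
      simp only [vZ, Pi.sub_apply, Finset.sum_sub_distrib, sum_stdZ] at hall
      cases t <;> simp [zsgn] at hall
  · by_contra hcon
    push Not at hcon
    have hle : ∀ p ∈ R, zsgn t * (zsgn p.1 • α p.2) i ≤ 0 := by
      intro p hp
      by_contra hpos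
      obtain ⟨b, hb⟩ := osg_next (osg_sgn p.1 (hOSG p.2)) t i (not_le.1 hpos)
      exact hcon p hp b hb
    have hall : zsgn t * wtM α R i ≤ 0 := by
      have key : ∀ S : Multiset (Bool × E), S ≤ R → zsgn t * wtM α S i ≤ 0 := by
        intro S
        induction S using Multiset.induction_on with
        | empty => intro _; simp [wtM]
        | cons p S ih =>
          intro hS
          have h1 := ih ((Multiset.le_cons_self S p).trans hS)
          have h2 := hle p (Multiset.mem_of_le hS (Multiset.mem_cons_self p S))
          have : wtM α (p ::ₘ S) = zsgn p.1 • α p.2 + wtM α S := by simp [wtM]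
          rw [this, Pi.add_apply, mul_add]
          linarith
      exact key R le_rfl
    rw [hR] at hall
    rcases c with _ | ⟨s, j⟩
    · cases t <;> simp [vZ, zsgn, stdZ] at hall
    · by_cases hij : i = j
      · subst hij
        cases t <;> cases s <;> simp [vZ, zsgn, stdZ] at hall hac
      · cases t <;> cases s <;> simp [vZ, zsgn, stdZ, Pi.single_apply, hij] at hall

/-- Building a cycle out of a path whose last step closes up. -/
lemma close_cycle {n : ℕ} {E : Type} (α : E → (Fin n → ℤ)) (ℓ : E → Fin n)
    (M : Multiset (Bool × E)) (hα : ∀ p ∈ M, α p.2 ≠ 0) (m j : ℕ) (hj : j ≤ m)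
    (vtx : ℕ → Option (SIdx n)) (edg : ℕ → E) (sg : ℕ → Bool)
    (hinj : ∀ a ≤ m, ∀ b ≤ m, vtx a = vtx b → a = b)
    (hstep : ∀ a < m, vZ (vtx a) - vZ (vtx (a + 1)) = zsgn (sg a) • α (edg a))
    (hlast : vZ (vtx m) - vZ (vtx j) = zsgn (sg m) • α (edg m))
    (hM : (Multiset.range (m + 1)).map (fun a => (sg a, edg a)) ≤ M) :
    ∃ C : SCycle n E α ℓ, cycM C ≤ M := by
  have hne : ∀ a ≤ m, α (edg a) ≠ 0 := fun a ha =>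
    hα (sg a, edg a) (Multiset.mem_of_le hM
      (Multiset.mem_map_of_mem (fun a => (sg a, edg a)) (Multiset.mem_range.2 (by omega))))
  refine ⟨⟨m - j, fun i => vtx (j + i), fun i => edg (j + i), fun i => sg (j + i), ?_, ?_⟩, ?_⟩
  · intro a b hab
    have := hinj (j + a) (by omega) (j + b) (by omega) hab
    ext
    omega
  · intro i
    have hi : vZ (vtx (j + i)) - vZ (vtx (j + (i + 1 : Fin (m - j + 1))))
        = zsgn (sg (j + i)) • α (edg (j + i)) := by
      rcases Fin.eq_castSucc_or_eq_last i with ⟨i', rfl⟩ | rfl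
      · rw [Fin.coeSucc_eq_succ]
        simpa [add_assoc] using hstep (j + i') (by omega)
      · have h1 : j + (m - j) = m := by omega
        simpa [h1] using hlast
    have h0 := hne (j + i) (by omega)
    cases hs : sg (j + i)
    · rw [hs] at hi
      simp only [zsgn] at hi
      refine if_neg (by simp) |>.mpr (Or.inl ⟨h0, ?_⟩)
      rw [← neg_sub, hi]; simp
    · rw [hs] at hi
      refine if_pos rfl |>.mpr (Or.inl ⟨h0, ?_⟩)
      rw [hi]; simp [zsgn]
  · refine le_trans ?_ hM
    have : ((Finset.univ : Finset (Fin (m - j + 1))).val.map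
        (fun i : Fin (m - j + 1) => (sg (j + i), edg (j + i)))) =
        ((Finset.univ : Finset (Fin (m - j + 1))).val.map (fun i : Fin (m - j + 1) => j + (i : ℕ))).map
          (fun a => (sg a, edg a)) := by
      rw [Multiset.map_map]; rfl
    change ((Finset.univ : Finset (Fin (m - j + 1))).val.map
        (fun i : Fin (m - j + 1) => (sg (j + i), edg (j + i)))) ≤ _
    rw [this]
    apply Multiset.map_le_map
    rw [Multiset.le_iff_subset]
    · intro x hx
      obtain ⟨i, _, rfl⟩ := Multiset.mem_map.1 hx
      exact Multiset.mem_range.2 (by omega)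
    · refine Multiset.Nodup.map ?_ Finset.univ.nodup
      intro a b hab
      ext
      simpa using hab

lemma path_wt {n : ℕ} {E : Type} (α : E → (Fin n → ℤ)) 
    (vtx : ℕ → Option (SIdx n)) (edg : ℕ → E) (sg : ℕ → Bool) (m : ℕ)
    (hstep : ∀ a < m, vZ (vtx a) - vZ (vtx (a + 1)) = zsgn (sg a) • α (edg a)) :
    wtM α ((Multiset.range m).map (fun a => (sg a, edg a))) = vZ (vtx 0) - vZ (vtx m) := by
  induction m with
  | zero => simp [wtM]
  | succ m ih =>
    have h := ih (fun a ha => hstep a (by omega))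
    have h' := hstep m (by omega)
    rw [Multiset.range_succ, Multiset.map_cons, ← Multiset.singleton_add, wtM_add, h]
    simp only [wtM, Multiset.map_singleton, Multiset.sum_singleton]
    rw [← h']
    abel

lemma extend_path {n : ℕ} {E : Type} (α : E → (Fin n → ℤ)) (ℓ : E → Fin n)
    (hOSG : ∀ e : E, IsOSGVec n (α e))
    (M : Multiset (Bool × E)) (hα : ∀ p ∈ M, α p.2 ≠ 0) (hw : wtM α M = 0) (fuel : ℕ) :
    ∀ (m : ℕ) (vtx : ℕ → Option (SIdx n)) (edg : ℕ → E) (sg : ℕ → Bool),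
    Fintype.card (Option (SIdx n)) ≤ fuel + m → 1 ≤ m →
    (∀ a ≤ m, ∀ b ≤ m, vtx a = vtx b → a = b) →
    (∀ a < m, vZ (vtx a) - vZ (vtx (a + 1)) = zsgn (sg a) • α (edg a)) →
    (Multiset.range m).map (fun a => (sg a, edg a)) ≤ M →
    ∃ C : SCycle n E α ℓ, cycM C ≤ M := by
  induction fuel with
  | zero =>
    intro m vtx edg sg hc h1 hinj _ _
    exfalso
    have := Fintype.card_le_of_injective (fun i : Fin (m + 1) => vtx i) (by
      intro a b hab
      ext
      exact hinj a (by omega) b (by omega) hab)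
    rw [Fintype.card_fin] at this
    omega
  | succ fuel ih =>
    intro m vtx edg sg hc h1 hinj hstep hM
    obtain ⟨R, hR⟩ := Multiset.le_iff_exists_add.1 hM
    have hRw : wtM α R = vZ (vtx m) - vZ (vtx 0) := by
      rw [hR, wtM_add, path_wt α vtx edg sg m hstep] at hw
      rw [← neg_sub, eq_neg_iff_add_eq_zero, add_comm]
      exact hw
    obtain ⟨⟨s, e⟩, hp, b, hb⟩ := next_step α hOSG R (vtx m) (vtx 0)
      (fun h => by have := hinj m le_rfl 0 (by omega) h; omega) hRw
    have hM' : (Multiset.range (m + 1)).map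
        (fun a => (Function.update sg m s a, Function.update edg m e a)) ≤ M := by
      rw [Multiset.range_succ, Multiset.map_cons, hR, ← Multiset.singleton_add, add_comm]
      refine add_le_add (le_of_eq ?_) ?_
      · refine Multiset.map_congr rfl ?_
        intro x hx
        have : x ≠ m := by have := Multiset.mem_range.1 hx; omega
        simp [Function.update_of_ne this]
      · simpa using hp
    by_cases hbj : ∃ j ≤ m, vtx j = b
    · obtain ⟨j, hj, rfl⟩ := hbj
      refine close_cycle α ℓ M hα m j hj vtx _ _ hinj ?_ ?_ hM'
      · intro a ha
        rw [Function.update_of_ne (by omega), Function.update_of_ne (by omega)]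
        exact hstep a ha
      · simpa using hb
    · push Not at hbj
      refine ih (m + 1) (Function.update vtx (m + 1) b) _ _ (by omega) (by omega) ?_ ?_ hM'
      · intro x hx y hy hxy
        by_cases hx' : x = m + 1 <;> by_cases hy' : y = m + 1
        · omega
        · subst hx'
          rw [Function.update_self, Function.update_of_ne hy'] at hxy
          exact absurd hxy.symm (hbj y (by omega))
        · subst hy'
          rw [Function.update_self, Function.update_of_ne hx'] at hxy
          exact absurd hxy (hbj x (by omega))
        · rw [Function.update_of_ne hx', Function.update_of_ne hy'] at hxy
          exact hinj x (by omega) y (by omega) hxy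
      · intro a ha
        by_cases ham : a = m
        · subst ham
          simpa using hb
        · rw [Function.update_of_ne ham, Function.update_of_ne ham,
            Function.update_of_ne (by omega), Function.update_of_ne (by omega)]
          exact hstep a (by omega)

lemma exists_cycle {n : ℕ} {E : Type} (α : E → (Fin n → ℤ)) (ℓ : E → Fin n)
    (hOSG : ∀ e : E, IsOSGVec n (α e))
    (M : Multiset (Bool × E)) (hM0 : M ≠ 0) (hw : wtM α M = 0) :
    ∃ C : SCycle n E α ℓ, cycM C ≤ M := by
  by_cases hα : ∀ p ∈ M, α p.2 ≠ 0
  · obtain ⟨⟨s, e⟩, hp⟩ := Multiset.exists_mem_of_ne_zero hM0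
    obtain ⟨a, b, hab⟩ := osg_start (osg_sgn s (hOSG e))
    have hne : a ≠ b := by
      rintro rfl
      have := hα _ hp
      apply this
      cases s <;> simpa [zsgn] using hab.symm
    refine extend_path α ℓ hOSG M hα hw (Fintype.card (Option (SIdx n))) 1
      (fun i => if i = 0 then a else b) (fun _ => e) (fun _ => s) (by omega) le_rfl ?_ ?_ ?_
    · intro x hx y hy hxy
      have : x = 0 ∨ x = 1 := by omega
      have : y = 0 ∨ y = 1 := by omega
      rcases ‹x = 0 ∨ x = 1› with rfl | rfl <;> rcases ‹y = 0 ∨ y = 1› with rfl | rfl <;>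
        simp_all
    · intro x hx
      have : x = 0 := by omega
      subst this
      simpa using hab
    · simpa using hp
  · push Not at hα
    obtain ⟨⟨s, e⟩, hp, h0⟩ := hα
    have h0' : α e = 0 := h0
    refine ⟨⟨0, fun _ => some (true, ℓ e), fun _ => e, fun _ => s, ?_, ?_⟩, ?_⟩
    · intro a b _
      exact Subsingleton.elim (α := Fin 1) a b
    · intro m
      split_ifs
      · exact Or.inr ⟨h0', true, rfl, rfl⟩
      · exact Or.inr ⟨h0', true, rfl, rfl⟩
    · simpa [cycM] using hp

lemma mem_span_of_wt {n : ℕ} {E : Type} (k : Type) [Field k]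
    (α : E → (Fin n → ℤ)) (ℓ : E → Fin n)
    (hOSG : ∀ e : E, IsOSGVec n (α e)) (N : ℕ) :
    ∀ M : Multiset (Bool × E), M.card ≤ N → wtM α M = 0 →
    monM k true M - monM k false M ∈
      Ideal.span {f | ∃ C : SCycle n E α ℓ, f = cycBin k C} := by
  induction N with
  | zero =>
    intro M hM _
    have : M = 0 := by simpa using hM
    subst this
    simp [monM]
  | succ N ih =>
    intro M hM hw
    by_cases h0 : M = 0
    · subst h0
      simp [monM]
    obtain ⟨C, hC⟩ := exists_cycle α ℓ hOSG M h0 hw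
    obtain ⟨R, rfl⟩ := Multiset.le_iff_exists_add.1 hC
    rw [wtM_add, wt_cyc, zero_add] at hw
    have hcard : (cycM C).card = C.len + 1 := by simp [cycM]
    rw [Multiset.card_add, hcard] at hM
    have hR := ih R (by omega) hw
    have hCm : cycBin k C ∈ Ideal.span {f | ∃ C : SCycle n E α ℓ, f = cycBin k C} :=
      Ideal.subset_span ⟨C, rfl⟩
    rw [monM_add, monM_add]
    have e : monM k true (cycM C) * monM k true R - monM k false (cycM C) * monM k false R
        = monM k true R * cycBin k C
          + monM k false (cycM C) * (monM k true R - monM k false R) := by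
      rw [cycBin_eq]; ring
    rw [e]
    exact Ideal.add_mem _ (Ideal.mul_mem_left _ _ hCm) (Ideal.mul_mem_left _ _ hR)

/-- The degree of an exponent vector. -/
def degF {n : ℕ} {E : Type} (α : E → (Fin n → ℤ)) (u : E →₀ ℕ) : Fin n →₀ ℤ :=
  u.sum fun e c => c • Finsupp.equivFunOnFinite.symm (α e)

lemma laurent_monomial {n : ℕ} {E : Type} (k : Type) [Field k]
    (α : E → (Fin n → ℤ)) (u : E →₀ ℕ) :
    laurentHom n k E α (MvPolynomial.monomial u 1) = AddMonoidAlgebra.single (degF α u) 1 := by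
  rw [laurentHom, MvPolynomial.aeval_monomial, map_one, one_mul]
  induction u using Finsupp.induction with
  | zero => simp [degF, AddMonoidAlgebra.one_def]
  | single_add e c u he hc ih =>
    rw [Finsupp.prod_add_index' (by simp) (by intros; rw [pow_add]), ih]
    have : degF α (Finsupp.single e c + u) =
        c • Finsupp.equivFunOnFinite.symm (α e) + degF α u := by
      rw [degF, Finsupp.sum_add_index' (by simp) (by intros; rw [add_smul])]
      simp [degF]
    rw [this]
    simp [AddMonoidAlgebra.single_pow, AddMonoidAlgebra.single_mul_single]

/-- The signed multiset attached to a pair of exponent vectors. -/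
def pairM {E : Type} (u v : E →₀ ℕ) : Multiset (Bool × E) :=
  u.toMultiset.map (fun e => (true, e)) + v.toMultiset.map (fun e => (false, e))

lemma toMultiset_prod_X {E : Type} (k : Type) [Field k] (u : E →₀ ℕ) :
    (u.toMultiset.map (fun e => (MvPolynomial.X e : MvPolynomial E k))).prod
      = MvPolynomial.monomial u 1 := by
  rw [Finsupp.toMultiset_map, Finsupp.prod_toMultiset, Finsupp.prod_mapDomain_index (by simp)
    (by intros; rw [pow_add]), MvPolynomial.monomial_eq]
  simp

lemma monM_pair_true {E : Type} (k : Type) [Field k] (u v : E →₀ ℕ) :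
    monM k true (pairM u v) = MvPolynomial.monomial u 1 := by
  rw [← toMultiset_prod_X, pairM, monM_add]
  simp [monM, Multiset.filter_map, Function.comp_def]

lemma monM_pair_false {E : Type} (k : Type) [Field k] (u v : E →₀ ℕ) :
    monM k false (pairM u v) = MvPolynomial.monomial v 1 := by
  rw [← toMultiset_prod_X, pairM, monM_add]
  simp [monM, Multiset.filter_map, Function.comp_def]

lemma degF_eq {n : ℕ} {E : Type} (α : E → (Fin n → ℤ)) (u : E →₀ ℕ) :
    ⇑(degF α u) = (u.toMultiset.map α).sum := by
  induction u using Finsupp.induction with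
  | zero => simp [degF]
  | single_add e c u he hc ih =>
    have : degF α (Finsupp.single e c + u) =
        c • Finsupp.equivFunOnFinite.symm (α e) + degF α u := by
      rw [degF, Finsupp.sum_add_index' (by simp) (by intros; rw [add_smul])]
      simp [degF]
    rw [this]
    ext i
    simp [Finsupp.toMultiset_single, Multiset.map_nsmul, ih, Multiset.sum_nsmul]

lemma wtM_pair {n : ℕ} {E : Type} (α : E → (Fin n → ℤ)) (u v : E →₀ ℕ) :
    wtM α (pairM u v) = ⇑(degF α u) - ⇑(degF α v) := by
  rw [degF_eq, degF_eq, pairM, wtM_add]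
  simp [wtM, zsgn, Function.comp_def, sub_eq_add_neg]

lemma ker_eq {n : ℕ} {E : Type} (k : Type) [Field k]
    (α : E → (Fin n → ℤ)) (ℓ : E → Fin n)
    (hOSG : ∀ e : E, IsOSGVec n (α e)) :
    RingHom.ker (laurentHom n k E α) =
      Ideal.span {f | ∃ C : SCycle n E α ℓ, f = cycBin k C} := by
  apply le_antisymm
  · intro f hf
    rw [RingHom.mem_ker] at hf
    set I := Ideal.span {f | ∃ C : SCycle n E α ℓ, f = cycBin k C} with hI
    have hc : ∀ d : Fin n →₀ ℤ, ∃ w : E →₀ ℕ, (∃ u, degF α u = d) → degF α w = d := by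
      intro d
      by_cases h : ∃ u, degF α u = d
      · obtain ⟨u, hu⟩ := h
        exact ⟨u, fun _ => hu⟩
      · exact ⟨0, fun h' => absurd h' h⟩
    choose w hw using hc
    let ψ : AddMonoidAlgebra k (Fin n →₀ ℤ) →ₗ[k] (MvPolynomial E k ⧸ I) :=
      (Finsupp.linearCombination k
        (fun d => Ideal.Quotient.mk I (MvPolynomial.monomial (w d) 1))) ∘ₗ
        (AddMonoidAlgebra.coeffLinearEquiv k).toLinearMap
    have hψ : ψ ∘ₗ (laurentHom n k E α).toLinearMap = (Ideal.Quotient.mkₐ k I).toLinearMap := by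
      apply (MvPolynomial.basisMonomials E k).ext
      intro u
      rw [MvPolynomial.coe_basisMonomials]
      simp only [LinearMap.comp_apply, AlgHom.toLinearMap_apply, laurent_monomial, ψ]
      have : (AddMonoidAlgebra.coeffLinearEquiv k).toLinearMap
          (AddMonoidAlgebra.single (degF α u) (1 : k)) = Finsupp.single (degF α u) 1 := rfl
      rw [this, Finsupp.linearCombination_single, one_smul, Ideal.Quotient.mkₐ_eq_mk,
        Ideal.Quotient.eq]
      have hd := hw (degF α u) ⟨u, rfl⟩
      have := mem_span_of_wt k α ℓ hOSG _ (pairM (w (degF α u)) u) le_rfl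
        (by rw [wtM_pair, hd, sub_self])
      rwa [monM_pair_true, monM_pair_false] at this
    have h1 := LinearMap.congr_fun hψ f
    simp only [LinearMap.comp_apply, AlgHom.toLinearMap_apply] at h1
    have hf' : laurentHom n k E α f = 0 := hf
    rw [hf', map_zero, Ideal.Quotient.mkₐ_eq_mk] at h1
    exact Ideal.Quotient.eq_zero_iff_mem.1 h1.symm
  · rw [Ideal.span_le]
    rintro f ⟨C, rfl⟩
    change cycBin k C ∈ RingHom.ker (laurentHom n k E α)
    rw [RingHom.mem_ker]
    have key : ∀ b, ∃ u : E →₀ ℕ, monM k b (cycM C) = MvPolynomial.monomial u 1 ∧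
        u.toMultiset = ((cycM C).filter (fun p => p.1 = b)).map Prod.snd := by
      intro b
      refine ⟨Multiset.toFinsupp (((cycM C).filter (fun p => p.1 = b)).map Prod.snd), ?_, ?_⟩
      · rw [← toMultiset_prod_X, Multiset.toFinsupp_toMultiset, Multiset.map_map]
        rfl
      · rw [Multiset.toFinsupp_toMultiset]
    obtain ⟨u, hu, hu'⟩ := key true
    obtain ⟨v, hv, hv'⟩ := key false
    have hpair : pairM u v = cycM C := by
      rw [pairM, hu', hv', Multiset.map_map, Multiset.map_map]
      have h1 : ∀ b, ((cycM C).filter (fun p => p.1 = b)).map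
          ((fun e => (b, e)) ∘ Prod.snd) = (cycM C).filter (fun p => p.1 = b) := by
        intro b
        conv_rhs => rw [← Multiset.map_id ((cycM C).filter (fun p => p.1 = b))]
        refine Multiset.map_congr rfl ?_
        rintro ⟨s, e⟩ hx
        have := (Multiset.mem_filter.1 hx).2
        simp at this
        simp [this]
      rw [h1, h1]
      conv_rhs => rw [← Multiset.filter_add_not (fun p => p.1 = true) (cycM C)]
      simp
    have hw := wt_cyc C
    rw [← hpair, wtM_pair, sub_eq_zero] at hw
    have hd : degF α u = degF α v := DFunLike.coe_injective hw
    change laurentHom n k E α (cycBin k C) = 0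
    rw [cycBin_eq, hu, hv, map_sub, laurent_monomial, laurent_monomial, hd, sub_self]

theorem statement_0 (n : ℕ) (hn : 1 ≤ n) (k : Type) [Field k]
    (E : Type) [Fintype E] (α : E → (Fin n → ℤ)) (ℓ : E → Fin n)
    (hOSG : ∀ e : E, IsOSGVec n (α e)) :
    RingHom.ker (laurentHom n k E α) =
      Ideal.span {f | ∃ C : SCycle n E α ℓ, ¬FixedInv C ∧ f = cycBin k C} ∧
    (∀ C : SCycle n E α ℓ, FixedInv C → cycBin k C = 0) ∧
    RingHom.ker (laurentHom n k E α) =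
      Ideal.span {f | ∃ C : SCycle n E α ℓ, f = cycBin k C} := by
  have hker := ker_eq k α ℓ hOSG
  refine ⟨?_, fun C hC => fixed_zero k C hC, hker⟩
  rw [hker]
  apply le_antisymm
  · rw [Ideal.span_le]
    rintro f ⟨C, rfl⟩
    by_cases hC : FixedInv C
    · rw [fixed_zero k C hC]
      exact Ideal.zero_mem _
    · exact Ideal.subset_span ⟨C, hC, rfl⟩
  · apply Ideal.span_mono
    rintro f ⟨C, _, rfl⟩
    exact ⟨C, rfl⟩
end
end

section
/- Let P ⊆ Φ_{B_n} be a signed poset and let x ∈ ℝ^n satisfy ⟨x, α⟩ > 0 for all α ∈ P and ⟨x, w(α_i)⟩ ≠ 0 for every w ∈ 𝓛(P) and every 1 ≤ i ≤ n. Then the function u ↦ e^{−⟨x,u⟩} is Lebesgue-integrable on the root cone K^rt_P, and ∫_{K^rt_P} e^{−⟨x,u⟩} du = Σ_{w ∈ 𝓛(P)} ∏_{i=1}^n ⟨x, w(α_i)⟩^{−1}, the integral being with respect to Lebesgue measure on ℝ^n. -/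
open scoped Classical

noncomputable section

/-- Standard basis vector `e_i` of `ℝ^n`. -/
def stdB (n : ℕ) (i : Fin n) : Fin n → ℝ := Pi.single i 1

/-- `rsgn true = 1`, `rsgn false = -1`. -/
def rsgn (s : Bool) : ℝ := if s then 1 else -1

/-- `v(a)` for `a ∈ ±[n]`: `v(+i) = e_i`, `v(-i) = -e_i`. -/
def vS {n : ℕ} (a : SIdx n) : Fin n → ℝ := rsgn a.1 • stdB n a.2

/-- `v` on `±[n] ∪ {0}` (with `none` playing the role of `0`). -/
def vO {n : ℕ} : Option (SIdx n) → (Fin n → ℝ)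
  | none => 0
  | some a => vS a

/-- Standard inner product on `ℝ^n`. -/
def dotR {n : ℕ} (x y : Fin n → ℝ) : ℝ := ∑ i, x i * y i

/-- The type `B_n` root system `Φ_{B_n}`. -/
def BnRoots (n : ℕ) : Set (Fin n → ℝ) :=
  {α | (∃ i j : Fin n, i < j ∧ ∃ s t : Bool, α = rsgn s • stdB n i + rsgn t • stdB n j) ∨
    ∃ i : Fin n, ∃ s : Bool, α = rsgn s • stdB n i}

/-- The positive roots `Φ⁺_{B_n}`. -/
def BnPos (n : ℕ) : Set (Fin n → ℝ) :=
  {α | (∃ i j : Fin n, i < j ∧ ∃ t : Bool, α = stdB n i + rsgn t • stdB n j) ∨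
    ∃ i : Fin n, α = stdB n i}

/-- The type `C_n` root system `Φ_{C_n}`. -/
def CnRoots (n : ℕ) : Set (Fin n → ℝ) :=
  {α | (∃ i j : Fin n, i < j ∧ ∃ s t : Bool, α = rsgn s • stdB n i + rsgn t • stdB n j) ∨
    ∃ i : Fin n, ∃ s : Bool, α = (2 * rsgn s) • stdB n i}

/-- Nonnegative real linear combinations of elements of `S`. -/
def nnSpan {n : ℕ} (S : Set (Fin n → ℝ)) : Set (Fin n → ℝ) :=
  {x | ∃ (r : ℕ) (c : Fin r → ℝ) (β : Fin r → (Fin n → ℝ)),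
    (∀ m, 0 ≤ c m) ∧ (∀ m, β m ∈ S) ∧ x = ∑ m, c m • β m}

/-- A signed poset: a subset of `Φ_{B_n}`, antisymmetric and closed under positive
linear combinations remaining in `Φ_{B_n}`. -/
def IsSignedPoset (n : ℕ) (P : Set (Fin n → ℝ)) : Prop :=
  P ⊆ BnRoots n ∧ (∀ α ∈ P, -α ∉ P) ∧ ∀ α ∈ BnRoots n, α ∈ nnSpan P → α ∈ P

/-- A `C_n`-signed poset. -/
def IsCnSignedPoset (n : ℕ) (Q : Set (Fin n → ℝ)) : Prop :=
  Q ⊆ CnRoots n ∧ (∀ α ∈ Q, -α ∉ Q) ∧ ∀ α ∈ CnRoots n, α ∈ nnSpan Q → α ∈ Q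

/-- The root cone `K^rt_P`. -/
def rootCone {n : ℕ} (P : Set (Fin n → ℝ)) : Set (Fin n → ℝ) := nnSpan P

/-- The weight cone `K^wt_P`. -/
def weightCone {n : ℕ} (P : Set (Fin n → ℝ)) : Set (Fin n → ℝ) :=
  {f | ∀ α ∈ P, 0 ≤ dotR f α}

/-- The Fischer (strict) order on `±[n] ∪ {0}`:
`a < b` iff `v(a) - v(b) ∈ P`, or (`b = -a ≠ 0` and `v(a) ∈ P`). -/
def fLT {n : ℕ} (P : Set (Fin n → ℝ)) (a b : Option (SIdx n)) : Prop :=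
  vO a - vO b ∈ P ∨ (a ≠ none ∧ b = negO a ∧ vO a ∈ P)

/-- A subset of `±[n]` is isotropic if it contains no pair `{i, -i}`. -/
def Isotropic {n : ℕ} (J : Finset (SIdx n)) : Prop :=
  ∀ i : Fin n, ¬((true, i) ∈ J ∧ (false, i) ∈ J)

/-- Signed characteristic vector of a subset of `±[n]`. -/
def chiF {n : ℕ} (J : Finset (SIdx n)) : Fin n → ℝ := fun i =>
  if (true, i) ∈ J then 1 else if (false, i) ∈ J then -1 else 0

/-- `J` is an ideal of the signed poset `P`. -/
def IsIdeal {n : ℕ} (P : Set (Fin n → ℝ)) (J : Finset (SIdx n)) : Prop :=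
  Isotropic J ∧ ∀ α ∈ P, 0 ≤ dotR (chiF J) α

/-- Comparability in the Fischer order of `P`. -/
def fComp {n : ℕ} (P : Set (Fin n → ℝ)) (a b : SIdx n) : Prop :=
  fLT P (some a) (some b) ∨ fLT P (some b) (some a)

/-- One step in the comparability graph on a subset `J` of `±[n]`. -/
def connStep {n : ℕ} (P : Set (Fin n → ℝ)) (J : Finset (SIdx n)) (a b : SIdx n) : Prop :=
  a ∈ J ∧ b ∈ J ∧ fComp P a b

/-- `J` is connected: nonempty, and any two of its elements are joined by a path inside `J`
in the comparability graph of the Fischer order of `P`. -/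
def IsConnectedIdl {n : ℕ} (P : Set (Fin n → ℝ)) (J : Finset (SIdx n)) : Prop :=
  J.Nonempty ∧ ∀ a ∈ J, ∀ b ∈ J, Relation.ReflTransGen (connStep P J) a b

/-- A connected ideal of `P`. -/
def IsConnIdeal {n : ℕ} (P : Set (Fin n → ℝ)) (J : Finset (SIdx n)) : Prop :=
  IsIdeal P J ∧ IsConnectedIdl P J

/-- Support `supp J = {|a| : a ∈ J}`. -/
def suppF {n : ℕ} (J : Finset (SIdx n)) : Finset (Fin n) := J.image Prod.snd

/-- `J` and `K` intersect nontrivially. -/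
def NontrivInter {n : ℕ} (J K : Finset (SIdx n)) : Prop :=
  (suppF J ∩ suppF K).Nonempty ∧ ¬J ⊆ K ∧ ¬K ⊆ J

/-- `J` and `K` intersect trivially. -/
def TrivInter {n : ℕ} (J K : Finset (SIdx n)) : Prop := ¬NontrivInter J K

/-- A signed permutation, as an anti-symmetric bijection of `±[n]`. -/
def IsSPerm {n : ℕ} (w : SIdx n ≃ SIdx n) : Prop := ∀ a, w (negS a) = negS (w a)

/-- Linear action of a signed permutation on `ℝ^n`, determined by `w(e_i) = v(w(+i))`. -/
def spAct {n : ℕ} (w : SIdx n ≃ SIdx n) (x : Fin n → ℝ) : Fin n → ℝ :=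
  ∑ i, x i • vS (w (true, i))

/-- `w` is a linear extension of `P`: a signed permutation with `P ⊆ w(Φ⁺_{B_n})`. -/
def IsLinExt {n : ℕ} (P : Set (Fin n → ℝ)) (w : SIdx n ≃ SIdx n) : Prop :=
  IsSPerm w ∧ ∀ α ∈ P, ∃ β ∈ BnPos n, α = spAct w β

/-- The (finite) set `𝓛(P)` of linear extensions of `P`. -/
def linExts (n : ℕ) (P : Set (Fin n → ℝ)) : Finset (SIdx n ≃ SIdx n) :=
  Finset.univ.filter (IsLinExt P)

/-- Simple roots of `Φ_{B_n}`: `α_i = e_i - e_{i+1}` for `i < n - 1`, `α_{n-1} = e_{n-1}`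
(0-indexed). -/
def simpleRoot (n : ℕ) (i : Fin n) : Fin n → ℝ := fun j =>
  (if j = i then (1 : ℝ) else 0) - if (j : ℕ) = (i : ℕ) + 1 then 1 else 0

/-- `J^w_m = {w(1), …, w(m)}` (0-indexed: the images under `w` of `+1, …, +(m+1)`). -/
def JwSet {n : ℕ} (w : SIdx n ≃ SIdx n) (m : Fin n) : Finset (SIdx n) :=
  (Finset.univ.filter (fun j : Fin n => j ≤ m)).image (fun j => w (true, j))

/-- An extensible ideal of `P`. -/
def Extensible (n : ℕ) (P : Set (Fin n → ℝ)) (J : Finset (SIdx n)) : Prop :=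
  ∃ I : Finset (SIdx n), I.Nonempty ∧ Disjoint I J ∧
    IsIdeal P (J ∪ I) ∧ IsIdeal P (J ∪ I.image negS)

/-- The finite set `J_conn(P)` of connected ideals of `P`. -/
def JconnF (n : ℕ) (P : Set (Fin n → ℝ)) : Finset (Finset (SIdx n)) :=
  Finset.univ.filter (IsConnIdeal P)

/-- Membership in `Π(P)`: an unordered pair of nontrivially intersecting connected ideals. -/
def inPiP {n : ℕ} (P : Set (Fin n → ℝ)) (p : Sym2 (Finset (SIdx n))) : Prop :=
  ∃ J K : Finset (SIdx n),
    p = s(J, K) ∧ IsConnIdeal P J ∧ IsConnIdeal P K ∧ NontrivInter J K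

/-- The finite set `Π(P)` of unordered pairs of nontrivially intersecting connected ideals. -/
def PiP (n : ℕ) (P : Set (Fin n → ℝ)) : Finset (Sym2 (Finset (SIdx n))) :=
  Finset.univ.filter (inPiP P)

/-- No connected ideal of `P` intersects two or more other connected ideals nontrivially. -/
def NoDoubleNontriv (n : ℕ) (P : Set (Fin n → ℝ)) : Prop :=
  ∀ J K K' : Finset (SIdx n), IsConnIdeal P J → IsConnIdeal P K → IsConnIdeal P K' →
    NontrivInter J K → NontrivInter J K' → K = K'

/-- The connected component of `a` inside `J` (w.r.t. the Fischer comparability graph). -/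
def componentIn {n : ℕ} (P : Set (Fin n → ℝ)) (J : Finset (SIdx n)) (a : SIdx n) :
    Finset (SIdx n) :=
  J.filter (fun b => Relation.ReflTransGen (connStep P J) a b)

/-- The set of connected components of `J`. -/
def componentsOf {n : ℕ} (P : Set (Fin n → ℝ)) (J : Finset (SIdx n)) :
    Finset (Finset (SIdx n)) :=
  J.image (componentIn P J)

/-- The signed support `supp±(f) = {sgn(f_i)·i : f_i ≠ 0}` of a vector `f ∈ ℝ^n`. -/
def suppPM {n : ℕ} (f : Fin n → ℝ) : Finset (SIdx n) :=
  Finset.univ.filter (fun a : SIdx n => if a.1 then 0 < f a.2 else f a.2 < 0)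

/-- Index type for the variables `U_J`, `J` a connected ideal of `P`. -/
abbrev ConnIdx (n : ℕ) (P : Set (Fin n → ℝ)) := {J : Finset (SIdx n) // IsConnIdeal P J}

/-- Integer signed characteristic vector, as an exponent vector for Laurent monomials. -/
def chiZ {n : ℕ} (J : Finset (SIdx n)) : Fin n →₀ ℤ :=
  Finsupp.equivFunOnFinite.symm (fun i =>
    if (true, i) ∈ J then 1 else if (false, i) ∈ J then -1 else 0)

/-- The map `φ : k[U_J : J ∈ J_conn(P)] → k[x_1^{±1}, …, x_n^{±1}]`, `U_J ↦ x^{χ_J}`. -/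
def phiWt (n : ℕ) (P : Set (Fin n → ℝ)) (k : Type) [Field k] :
    MvPolynomial (ConnIdx n P) k →ₐ[k] AddMonoidAlgebra k (Fin n →₀ ℤ) :=
  MvPolynomial.aeval (fun J => AddMonoidAlgebra.single (chiZ J.val) 1)

/-- The binomial `syz(U_J, U_K) = U_J U_K - (∏_A U_A) (∏_B U_B)`, where `A` runs over the
connected components of `J ∩ K` and `B` over the connected components of `supp±(χ_J + χ_K)`. -/
def syzPoly (n : ℕ) (P : Set (Fin n → ℝ)) (k : Type) [Field k] (J K : ConnIdx n P) :
    MvPolynomial (ConnIdx n P) k :=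
  MvPolynomial.X J * MvPolynomial.X K -
    (∏ A ∈ Finset.univ.filter
        (fun A : ConnIdx n P => (A : Finset (SIdx n)) ∈ componentsOf P (J.val ∩ K.val)),
        MvPolynomial.X A) *
      ∏ B ∈ Finset.univ.filter
        (fun B : ConnIdx n P =>
          (B : Finset (SIdx n)) ∈ componentsOf P (suppPM (chiF J.val + chiF K.val))),
        MvPolynomial.X B

/-- `θ_1, …, θ_r` is a regular sequence: the ideal it generates is proper, and each `θ_{m+1}`
is a non-zero-divisor modulo the ideal generated by `θ_1, …, θ_m`. -/
def IsRegSeq {R : Type} [CommRing R] {r : ℕ} (θ : Fin r → R) : Prop :=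
  Ideal.span (Set.range θ) ≠ ⊤ ∧
    ∀ (m : ℕ) (hm : m < r) (x : R),
      θ ⟨m, hm⟩ * x ∈ Ideal.span (θ '' {j : Fin r | (j : ℕ) < m}) →
        x ∈ Ideal.span (θ '' {j : Fin r | (j : ℕ) < m})

/-- The induced signed poset `P_A = P ∩ span_ℝ{e_i : i ∈ A}`. -/
def inducedPoset (n : ℕ) (P : Set (Fin n → ℝ)) (A : Finset (Fin n)) : Set (Fin n → ℝ) :=
  {α | α ∈ P ∧ α ∈ Submodule.span ℝ (stdB n '' (A : Set (Fin n)))}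

/-- The major index of a signed permutation. -/
def majB {n : ℕ} (w : SIdx n ≃ SIdx n) : ℕ :=
  ∑ i ∈ Finset.univ.filter
      (fun i : Fin n => spAct w (simpleRoot n i) ∉ BnPos n), ((i : ℕ) + 1)

/-- `[m]_q = 1 + q + ⋯ + q^{m-1}` in `ℤ[q]`. -/
def qInt (m : ℕ) : Polynomial ℤ := ∑ t ∈ Finset.range m, Polynomial.X ^ t

/-- The symmetric function `{J, K} ↦ ⟨x, χ_J + χ_K⟩` on unordered pairs. -/
def pairDot {n : ℕ} (x : Fin n → ℝ) : Sym2 (Finset (SIdx n)) → ℝ :=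
  Sym2.lift ⟨fun J K => dotR x (chiF J + chiF K),
    fun J K => congrArg (dotR x) (add_comm (chiF J) (chiF K))⟩

/-- The symmetric function `{J, K} ↦ [|J| + |K|]_q` on unordered pairs. -/
def pairQ {n : ℕ} : Sym2 (Finset (SIdx n)) → Polynomial ℤ :=
  Sym2.lift ⟨fun J K => qInt (J.card + K.card),
    fun J K => congrArg qInt (Nat.add_comm J.card K.card)⟩

/-- The principal order ideal `I_≤(a)` in the Fischer order restricted to `±[n]`. -/
def Ile {n : ℕ} (P : Set (Fin n → ℝ)) (a : SIdx n) : Set (SIdx n) :=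
  {b | b = a ∨ fLT P (some b) (some a)}

/-- A set of signed indices is isotropic if it contains no pair `{i, -i}`. -/
def IsoSet {n : ℕ} (S : Set (SIdx n)) : Prop :=
  ∀ i : Fin n, ¬((true, i) ∈ S ∧ (false, i) ∈ S)

/-- A covering pair of the Fischer order of `P`. -/
def CovPair {n : ℕ} (P : Set (Fin n → ℝ)) (a b : Option (SIdx n)) : Prop :=
  fLT P a b ∧ ¬∃ c : Option (SIdx n), fLT P a c ∧ fLT P c b

/-- The set of covering roots of `P`. -/
def covRoots {n : ℕ} (P : Set (Fin n → ℝ)) : Set (Fin n → ℝ) :=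
  {x | ∃ a b : Option (SIdx n), CovPair P a b ∧ x = vO a - vO b}

/-- The set `J_ε = {i : ε_i = 1} ∪ {-i : ε_i = -1}` attached to a `{-1,0,1}`-vector. -/
def Jeps {n : ℕ} (ε : Fin n → ℝ) : Set (SIdx n) :=
  {a | (a.1 = true ∧ ε a.2 = 1) ∨ (a.1 = false ∧ ε a.2 = -1)}

open MeasureTheory
/-! ### Linear algebra of signed permutations -/

theorem dotR_add {n : ℕ} (x y z : Fin n → ℝ) : dotR x (y + z) = dotR x y + dotR x z :=
  dotProduct_add x y z
theorem dotR_sub {n : ℕ} (x y z : Fin n → ℝ) : dotR x (y - z) = dotR x y - dotR x z :=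
  dotProduct_sub x y z
theorem dotR_neg {n : ℕ} (x y : Fin n → ℝ) : dotR x (-y) = - dotR x y :=
  dotProduct_neg x y
theorem dotR_smul {n : ℕ} (x y : Fin n → ℝ) (c : ℝ) : dotR x (c • y) = c * dotR x y :=
  dotProduct_smul c x y
theorem dotR_comm {n : ℕ} (x y : Fin n → ℝ) : dotR x y = dotR y x :=
  dotProduct_comm x y
theorem dotR_sum {n : ℕ} {ι : Type*} (s : Finset ι) (x : Fin n → ℝ) (y : ι → Fin n → ℝ) :
    dotR x (∑ i ∈ s, y i) = ∑ i ∈ s, dotR x (y i) :=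
  dotProduct_sum x s y
theorem dotR_add_left {n : ℕ} (x y z : Fin n → ℝ) : dotR (x + y) z = dotR x z + dotR y z :=
  add_dotProduct x y z
theorem dotR_sub_left {n : ℕ} (x y z : Fin n → ℝ) : dotR (x - y) z = dotR x z - dotR y z :=
  sub_dotProduct x y z
theorem dotR_smul_left {n : ℕ} (x y : Fin n → ℝ) (c : ℝ) : dotR (c • x) y = c * dotR x y :=
  smul_dotProduct c x y

theorem dotR_stdB {n : ℕ} (x : Fin n → ℝ) (i : Fin n) : dotR x (stdB n i) = x i := by
  unfold stdB
  exact dotProduct_single_one x i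

theorem dotR_vS {n : ℕ} (x : Fin n → ℝ) (a : SIdx n) : dotR x (vS a) = rsgn a.1 * x a.2 := by
  rw [vS, dotR_smul, dotR_stdB]

theorem rsgn_mul_self (b : Bool) : rsgn b * rsgn b = 1 := by
  cases b <;> simp [rsgn]

theorem rsgn_not (b : Bool) : rsgn (!b) = - rsgn b := by
  cases b <;> simp [rsgn]

theorem vS_negS {n : ℕ} (a : SIdx n) : vS (negS a) = - vS a := by
  simp [vS, negS, rsgn_not]

theorem negS_negS {n : ℕ} (a : SIdx n) : negS (negS a) = a := by
  simp [negS]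

theorem snd_eq_iff {n : ℕ} (a b : SIdx n) : a.2 = b.2 ↔ a = b ∨ a = negS b := by
  obtain ⟨s, i⟩ := a
  obtain ⟨t, j⟩ := b
  cases s <;> cases t <;> simp [negS]

/-- linear version of `spAct` -/
def spL {n : ℕ} (w : SIdx n ≃ SIdx n) : (Fin n → ℝ) →ₗ[ℝ] (Fin n → ℝ) where
  toFun := spAct w
  map_add' x y := by simp [spAct, add_smul, Finset.sum_add_distrib]
  map_smul' c x := by simp [spAct, mul_smul, Finset.smul_sum]

theorem spAct_add {n : ℕ} (w : SIdx n ≃ SIdx n) (x y : Fin n → ℝ) :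
    spAct w (x + y) = spAct w x + spAct w y := map_add (spL w) x y
theorem spAct_sub {n : ℕ} (w : SIdx n ≃ SIdx n) (x y : Fin n → ℝ) :
    spAct w (x - y) = spAct w x - spAct w y := map_sub (spL w) x y
theorem spAct_neg {n : ℕ} (w : SIdx n ≃ SIdx n) (x : Fin n → ℝ) :
    spAct w (-x) = - spAct w x := map_neg (spL w) x
theorem spAct_smul {n : ℕ} (w : SIdx n ≃ SIdx n) (c : ℝ) (x : Fin n → ℝ) :
    spAct w (c • x) = c • spAct w x := map_smul (spL w) c x
theorem spAct_sum {n : ℕ} {ι : Type*} (s : Finset ι) (w : SIdx n ≃ SIdx n) (x : ι → Fin n → ℝ) :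
    spAct w (∑ i ∈ s, x i) = ∑ i ∈ s, spAct w (x i) := map_sum (spL w) x s

theorem spAct_stdB {n : ℕ} (w : SIdx n ≃ SIdx n) (i : Fin n) :
    spAct w (stdB n i) = vS (w (true, i)) := by
  unfold spAct stdB
  rw [Finset.sum_eq_single i]
  · simp
  · intro j _ hj; simp [hj]
  · simp

theorem spAct_vS {n : ℕ} (w : SIdx n ≃ SIdx n) (hw : IsSPerm w) (a : SIdx n) :
    spAct w (vS a) = vS (w a) := by
  obtain ⟨s, i⟩ := a
  rw [vS, spAct_smul, spAct_stdB]
  cases s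
  · have h := hw (true, i)
    simp only [negS, Bool.not_true] at h
    rw [h]
    have := vS_negS (w (true, i))
    simp only [negS] at this
    rw [this]; simp [rsgn]
  · simp [rsgn]

theorem eq_sum_vS {n : ℕ} (y : Fin n → ℝ) : y = ∑ i, y i • vS ((true, i) : SIdx n) := by
  ext k
  simp [vS, rsgn, stdB, Pi.single_apply]

theorem spAct_trans {n : ℕ} (s w : SIdx n ≃ SIdx n) (hw : IsSPerm w) (y : Fin n → ℝ) :
    spAct (s.trans w) y = spAct w (spAct s y) := by
  rw [spAct.eq_1 s y, spAct_sum, spAct.eq_1 (s.trans w) y]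
  refine Finset.sum_congr rfl fun i _ => ?_
  rw [spAct_smul, spAct_vS w hw]; rfl

theorem spAct_refl {n : ℕ} (y : Fin n → ℝ) : spAct (Equiv.refl _) y = y := by
  conv_rhs => rw [eq_sum_vS y]
  rfl

theorem IsSPerm.symm' {n : ℕ} {w : SIdx n ≃ SIdx n} (hw : IsSPerm w) : IsSPerm w.symm := by
  intro a
  apply w.injective
  rw [hw]; simp

theorem IsSPerm.trans' {n : ℕ} {s w : SIdx n ≃ SIdx n} (hs : IsSPerm s) (hw : IsSPerm w) :
    IsSPerm (s.trans w) := by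
  intro a
  simp [hs a, hw (s a)]

theorem spAct_symm {n : ℕ} {w : SIdx n ≃ SIdx n} (hw : IsSPerm w) (y : Fin n → ℝ) :
    spAct w (spAct w.symm y) = y := by
  rw [← spAct_trans _ _ hw]; simp [spAct_refl]

theorem IsSPerm.snd_eq {n : ℕ} {w : SIdx n ≃ SIdx n} (hw : IsSPerm w) (a b : SIdx n) :
    (w a).2 = (w b).2 ↔ a.2 = b.2 := by
  rw [snd_eq_iff, snd_eq_iff, ← hw b]; simp

theorem dot_vS_vS {n : ℕ} (i : Fin n) (b : SIdx n) :
    dotR (vS (true, i)) (vS b) = if b.2 = i then rsgn b.1 else 0 := by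
  rw [dotR_vS]
  simp [vS, stdB, rsgn, Pi.single_apply]

theorem dot_spAct_vS {n : ℕ} {w : SIdx n ≃ SIdx n} (hw : IsSPerm w) (y : Fin n → ℝ)
    (a : SIdx n) : dotR (spAct w y) (vS (w a)) = rsgn a.1 * y a.2 := by
  rw [dotR_comm, spAct, dotR_sum]
  rw [Finset.sum_eq_single a.2]
  · rw [dotR_smul]
    obtain ⟨s, i⟩ := a
    have hself : ∀ b : SIdx n, dotR (vS b) (vS b) = 1 := by
      intro b
      rw [dotR_vS]
      simp [vS, stdB, rsgn_mul_self]
    cases s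
    · have h := hw (true, i)
      simp only [negS, Bool.not_true] at h
      rw [h]
      have h2 := vS_negS (w (true, i))
      simp only [negS] at h2
      rw [h2, dotR_comm, dotR_neg, hself]; simp [rsgn]
    · rw [hself]; simp [rsgn]
  · intro j _ hj
    rw [dotR_smul, dotR_vS]
    have : (w a).2 ≠ (w (true, j)).2 := by
      rw [Ne, hw.snd_eq]; exact fun h => hj h.symm
    simp [vS, stdB, this.symm]
  · simp

theorem dot_spAct {n : ℕ} {w : SIdx n ≃ SIdx n} (hw : IsSPerm w) (x y : Fin n → ℝ) :
    dotR (spAct w x) (spAct w y) = dotR x y := by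
  conv_lhs => rw [spAct.eq_1 w y, dotR_sum]
  unfold dotR
  refine Finset.sum_congr rfl fun i _ => ?_
  have := dot_spAct_vS hw x (true, i)
  have h2 := dotR_smul (spAct w x) (vS (w (true, i))) (y i)
  unfold dotR at this h2
  rw [h2, this]; simp [rsgn]; ring

/-! ### Roots -/

theorem vS_mem_roots {n : ℕ} (a : SIdx n) : vS a ∈ BnRoots n := Or.inr ⟨a.2, a.1, rfl⟩

theorem vS_add_mem_roots {n : ℕ} (a b : SIdx n) (h : a.2 ≠ b.2) : vS a + vS b ∈ BnRoots n := by
  rcases lt_or_gt_of_ne h with h | h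
  · exact Or.inl ⟨a.2, b.2, h, a.1, b.1, rfl⟩
  · exact Or.inl ⟨b.2, a.2, h, b.1, a.1, add_comm _ _⟩

theorem roots_cases {n : ℕ} {α : Fin n → ℝ} (h : α ∈ BnRoots n) :
    (∃ a b : SIdx n, a.2 ≠ b.2 ∧ α = vS a + vS b) ∨ ∃ a : SIdx n, α = vS a := by
  rcases h with ⟨i, j, hij, s, t, rfl⟩ | ⟨i, s, rfl⟩
  · exact Or.inl ⟨(s, i), (t, j), hij.ne, rfl⟩
  · exact Or.inr ⟨(s, i), rfl⟩

theorem spAct_mem_roots {n : ℕ} {w : SIdx n ≃ SIdx n} (hw : IsSPerm w) {α : Fin n → ℝ}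
    (h : α ∈ BnRoots n) : spAct w α ∈ BnRoots n := by
  rcases roots_cases h with ⟨a, b, hab, rfl⟩ | ⟨a, rfl⟩
  · rw [spAct_add, spAct_vS w hw, spAct_vS w hw]
    exact vS_add_mem_roots _ _ (by rwa [Ne, hw.snd_eq])
  · rw [spAct_vS w hw]; exact vS_mem_roots _

theorem exists_root {n : ℕ} {w : SIdx n ≃ SIdx n} (hw : IsSPerm w) {α : Fin n → ℝ}
    (h : α ∈ BnRoots n) : ∃ γ ∈ BnRoots n, α = spAct w γ :=
  ⟨spAct w.symm α, spAct_mem_roots hw.symm' h, (spAct_symm hw α).symm⟩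

theorem pos_or_neg {n : ℕ} {α : Fin n → ℝ} (h : α ∈ BnRoots n) : α ∈ BnPos n ∨ -α ∈ BnPos n := by
  rcases h with ⟨i, j, hij, s, t, rfl⟩ | ⟨i, s, rfl⟩
  · cases s
    · right; left
      refine ⟨i, j, hij, !t, ?_⟩
      rw [rsgn_not]; simp [rsgn]; abel
    · left; left
      exact ⟨i, j, hij, t, by simp [rsgn]⟩
  · cases s
    · right; right; exact ⟨i, by simp [rsgn]⟩
    · left; right; exact ⟨i, by simp [rsgn]⟩

theorem pos_mem_roots {n : ℕ} {α : Fin n → ℝ} (h : α ∈ BnPos n) : α ∈ BnRoots n := by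
  rcases h with ⟨i, j, hij, t, rfl⟩ | ⟨i, rfl⟩
  · exact Or.inl ⟨i, j, hij, true, t, by simp [rsgn]⟩
  · exact Or.inr ⟨i, true, by simp [rsgn]⟩

/-- twice the half sum of positive roots -/
def rho2 (n : ℕ) : Fin n → ℝ := fun i => 2 * ((n : ℝ) - i) - 1

theorem rho2_pos {n : ℕ} (i : Fin n) : 0 < rho2 n i := by
  have : ((i : ℕ) : ℝ) + 1 ≤ n := by exact_mod_cast i.2
  unfold rho2; linarith

theorem rho2_lt {n : ℕ} {i j : Fin n} (h : i < j) : rho2 n j < rho2 n i := by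
  have : ((i : ℕ) : ℝ) + 1 ≤ j := by exact_mod_cast h
  unfold rho2; linarith

theorem rho2_inj {n : ℕ} {i j : Fin n} (h : rho2 n i = rho2 n j) : i = j := by
  by_contra hne
  rcases lt_or_gt_of_ne hne with h' | h' <;> have := rho2_lt h' <;> linarith

theorem dot_rho2_pos {n : ℕ} {α : Fin n → ℝ} (h : α ∈ BnPos n) : 0 < dotR (rho2 n) α := by
  rcases h with ⟨i, j, hij, t, rfl⟩ | ⟨i, rfl⟩
  · rw [dotR_add, dotR_smul, dotR_stdB, dotR_stdB]
    have h1 := rho2_lt hij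
    have h2 := rho2_pos j
    cases t <;> simp [rsgn] <;> linarith
  · rw [dotR_stdB]; exact rho2_pos i

/-- fundamental weights -/
def fund (n : ℕ) (i : Fin n) : Fin n → ℝ := fun k => if k ≤ i then 1 else 0

theorem dot_simple {n : ℕ} (y : Fin n → ℝ) (i : Fin n) :
    dotR y (simpleRoot n i) = y i - if h : (i : ℕ) + 1 < n then y ⟨i + 1, h⟩ else 0 := by
  unfold dotR simpleRoot
  simp only [mul_sub, Finset.sum_sub_distrib]
  congr 1
  · simp
  · split_ifs with h
    · rw [Finset.sum_eq_single ⟨i + 1, h⟩]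
      · simp
      · intro b _ hb
        have : (b : ℕ) ≠ i + 1 := fun h' => hb (Fin.ext h')
        simp [this]
      · simp
    · refine Finset.sum_eq_zero fun b _ => ?_
      have : (b : ℕ) ≠ i + 1 := by have := b.2; omega
      simp [this]

theorem dot_fund_simple {n : ℕ} (i k : Fin n) :
    dotR (fund n i) (simpleRoot n k) = if i = k then 1 else 0 := by
  rw [dot_simple]
  unfold fund
  have hi := i.2
  simp only [Fin.le_def, Fin.ext_iff]
  split_ifs <;> first | omega | norm_num

theorem fund_simple_dual {n : ℕ} (k l : Fin n) :
    ∑ i, fund n i k * simpleRoot n i l = if k = l then 1 else 0 := by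
  have h : (Matrix.of (simpleRoot n)) * (Matrix.of (fund n)).transpose = 1 := by
    ext a b
    have := dot_fund_simple b a
    rw [dotR_comm] at this
    rw [Matrix.one_apply, Matrix.mul_apply]
    simp only [Matrix.of_apply, Matrix.transpose_apply]
    unfold dotR at this
    rw [this]
    simp [eq_comm]
  have h' := mul_eq_one_comm.1 h
  have h2 := congrFun (congrFun h' k) l
  rw [Matrix.one_apply, Matrix.mul_apply] at h2
  simpa using h2

theorem expand_simple {n : ℕ} (y : Fin n → ℝ) : y = ∑ i, dotR y (fund n i) • simpleRoot n i := by
  ext l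
  simp only [Finset.sum_apply, Pi.smul_apply, smul_eq_mul, dotR, Finset.sum_mul]
  rw [Finset.sum_comm]
  simp only [mul_assoc, ← Finset.mul_sum, fund_simple_dual]
  simp

theorem dot_expand {n : ℕ} {w : SIdx n ≃ SIdx n} (hw : IsSPerm w) (x u : Fin n → ℝ) :
    dotR x u = ∑ i, dotR u (spAct w (fund n i)) * dotR x (spAct w (simpleRoot n i)) := by
  have h := spAct_symm hw u
  conv_lhs => rw [← h, expand_simple (spAct w.symm u), spAct_sum, dotR_sum]
  refine Finset.sum_congr rfl fun i _ => ?_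
  rw [spAct_smul, dotR_smul, ← dot_spAct hw, h]

theorem dot_fund_nonneg {n : ℕ} {α : Fin n → ℝ} (h : α ∈ BnPos n) (i : Fin n) :
    0 ≤ dotR α (fund n i) := by
  rw [dotR_comm]
  rcases h with ⟨a, b, hab, t, rfl⟩ | ⟨a, rfl⟩
  · rw [dotR_add, dotR_smul, dotR_stdB, dotR_stdB]
    unfold fund
    simp only [Fin.le_def]
    rw [Fin.lt_def] at hab
    cases t <;> simp only [rsgn] <;> split_ifs <;> first | omega | norm_num
  · rw [dotR_stdB]; unfold fund; split_ifs <;> norm_num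

theorem simple_mem_pos {n : ℕ} (i : Fin n) : simpleRoot n i ∈ BnPos n := by
  by_cases h : (i : ℕ) + 1 < n
  · left
    refine ⟨i, ⟨i + 1, h⟩, by simp [Fin.lt_def], false, ?_⟩
    ext k
    simp [simpleRoot, stdB, rsgn, Pi.single_apply, Fin.ext_iff]
    ring
  · right
    refine ⟨i, ?_⟩
    ext k
    have : (k : ℕ) ≠ i + 1 := by have := k.2; omega
    simp [simpleRoot, stdB, Pi.single_apply, this]

theorem simple_inj {n : ℕ} {i j : Fin n} (h : simpleRoot n i = simpleRoot n j ∨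
    simpleRoot n i = - simpleRoot n j) : i = j := by
  by_contra hne
  have h1 := dot_fund_simple i i
  have h2 := dot_fund_simple i j
  rcases h with h | h
  · rw [h] at h1; simp [hne] at h2; rw [h2] at h1; simp at h1
  · rw [h, dotR_neg] at h1; simp [hne] at h2; rw [h2] at h1; simp at h1

/-! ### Simple reflections -/

/-- underlying function of the simple reflection -/
def srefFun {n : ℕ} (j : Fin n) (a : SIdx n) : SIdx n :=
  if h : (j : ℕ) + 1 < n then (a.1, Equiv.swap j ⟨j + 1, h⟩ a.2)
  else (if a.2 = j then !a.1 else a.1, a.2)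

theorem srefFun_invol {n : ℕ} (j : Fin n) : Function.Involutive (srefFun j) := by
  intro a
  unfold srefFun
  by_cases h : (j : ℕ) + 1 < n
  · simp [h]
  · simp only [h, dite_false]
    by_cases h2 : a.2 = j <;> simp [h2]
    · ext <;> simp [h2]

/-- simple reflection as a signed permutation -/
def sref {n : ℕ} (j : Fin n) : SIdx n ≃ SIdx n := (srefFun_invol j).toPerm

theorem sref_apply {n : ℕ} (j : Fin n) (a : SIdx n) : sref j a = srefFun j a := rfl

theorem sref_sperm {n : ℕ} (j : Fin n) : IsSPerm (sref j) := by
  intro a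
  simp only [sref_apply, srefFun, negS]
  by_cases h : (j : ℕ) + 1 < n
  · simp [h]
  · simp only [h, dite_false]
    by_cases h2 : a.2 = j <;> simp [h2]

theorem sref_symm {n : ℕ} (j : Fin n) : (sref j).symm = sref j := rfl

theorem sref_sref {n : ℕ} (j : Fin n) (y : Fin n → ℝ) : spAct (sref j) (spAct (sref j) y) = y :=
  spAct_symm (sref_sperm j) y

/-- normalizing constant -/
def crf {n : ℕ} (j : Fin n) : ℝ := if (j : ℕ) + 1 < n then 1 else 2

theorem spAct_sref {n : ℕ} (j : Fin n) (y : Fin n → ℝ) :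
    spAct (sref j) y = y - (crf j * dotR y (simpleRoot n j)) • simpleRoot n j := by
  ext k
  have h1 : spAct (sref j) y k = rsgn (sref j (true, k)).1 * y (sref j (true, k)).2 := by
    rw [← dot_spAct_vS (sref_sperm j), sref_apply, sref_apply, srefFun_invol, dotR_vS]
    simp [rsgn]
  rw [h1, dot_simple, sref_apply, srefFun, crf]
  by_cases h : (j : ℕ) + 1 < n
  · simp only [h, dite_true, Pi.sub_apply, Pi.smul_apply, smul_eq_mul, if_true, simpleRoot]
    by_cases h2 : k = j
    · subst h2
      simp [rsgn]
    · by_cases h3 : k = ⟨j + 1, h⟩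
      · subst h3
        rw [Equiv.swap_apply_right]
        have : (⟨j + 1, h⟩ : Fin n) ≠ j := by simp [Fin.ext_iff]
        simp [rsgn, this]
      · rw [Equiv.swap_apply_of_ne_of_ne h2 h3]
        have : (k : ℕ) ≠ j + 1 := fun h' => h3 (Fin.ext h')
        simp [rsgn, h2, this]
  · simp only [h, dite_false, Pi.sub_apply, Pi.smul_apply, smul_eq_mul, if_false, simpleRoot]
    have : (k : ℕ) ≠ j + 1 := by have := k.2; omega
    by_cases h2 : k = j
    · subst h2; simp [rsgn]; ring
    · simp [rsgn, h2, this]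

theorem crf_simple {n : ℕ} (j : Fin n) : crf j * dotR (simpleRoot n j) (simpleRoot n j) = 2 := by
  rw [dot_simple, crf]
  by_cases h : (j : ℕ) + 1 < n
  · simp [h, simpleRoot, Fin.ext_iff]; norm_num
  · simp [h, simpleRoot]

theorem crf_rho {n : ℕ} (j : Fin n) : crf j * dotR (rho2 n) (simpleRoot n j) = 2 := by
  rw [dot_simple, crf]
  by_cases h : (j : ℕ) + 1 < n
  · simp [h, rho2]; ring
  · have h2 : (n : ℝ) = j + 1 := by
      have := j.2
      have : n = j + 1 := by omega
      exact_mod_cast this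
    simp only [h, rho2]; rw [h2]; simp; ring

theorem sref_simple {n : ℕ} (j : Fin n) :
    spAct (sref j) (simpleRoot n j) = - simpleRoot n j := by
  rw [spAct_sref, crf_simple, two_smul]; abel

theorem sref_rho {n : ℕ} (j : Fin n) :
    spAct (sref j) (rho2 n) = rho2 n - (2 : ℝ) • simpleRoot n j := by
  rw [spAct_sref, crf_rho]

theorem sref_fund {n : ℕ} {j k : Fin n} (h : k ≠ j) : spAct (sref j) (fund n k) = fund n k := by
  rw [spAct_sref, dot_fund_simple]; simp [h]

theorem pos_entry {n : ℕ} {γ : Fin n → ℝ} (h : γ ∈ BnPos n) (k : Fin n) :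
    γ k = 1 ∨ γ k = 0 ∨ γ k = -1 := by
  rcases h with ⟨i, j, hij, t, rfl⟩ | ⟨i, rfl⟩
  · simp only [stdB, Pi.add_apply, Pi.smul_apply, Pi.single_apply, smul_eq_mul]
    by_cases h1 : k = i
    · have : k ≠ j := by rw [h1]; exact hij.ne
      simp [h1, hij.ne]
    · cases t <;> by_cases h2 : k = j <;> simp [h1, h2, rsgn]
      · simp [hij.ne']
      · simp [hij.ne']
  · simp only [stdB, Pi.single_apply]
    by_cases h1 : k = i <;> simp [h1]

theorem sref_pos {n : ℕ} {j : Fin n} {γ : Fin n → ℝ} (h : γ ∈ BnPos n) (hne : γ ≠ simpleRoot n j) :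
    spAct (sref j) γ ∈ BnPos n := by
  rcases pos_or_neg (spAct_mem_roots (sref_sperm j) (pos_mem_roots h)) with h1 | h1
  · exact h1
  exfalso
  have hz : ∀ k, k ≠ j → dotR γ (fund n k) = 0 := by
    intro k hk
    have h2 := dot_fund_nonneg h1 k
    have h3 := dot_fund_nonneg h k
    rw [dotR_comm, dotR_neg, dotR_comm] at h2
    rw [← sref_fund hk, dot_spAct (sref_sperm j)] at h2
    linarith
  have he := expand_simple γ
  rw [Finset.sum_eq_single j (fun k _ hk => by rw [hz k hk, zero_smul]) (by simp)] at he
  have hj := congrFun he j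
  simp only [Pi.smul_apply, smul_eq_mul] at hj
  have hs : simpleRoot n j j = 1 := by simp [simpleRoot]
  rw [hs, mul_one] at hj
  have hnn := dot_fund_nonneg h j
  rcases pos_entry h j with h4 | h4 | h4
  · rw [← hj, h4, one_smul] at he; exact hne he
  · rw [← hj, h4, zero_smul] at he
    have := dot_rho2_pos h
    rw [he] at this
    simp [dotR] at this
  · rw [← hj, h4] at hnn; linarith

theorem dot_sref_rho_pos {n : ℕ} {j : Fin n} {γ : Fin n → ℝ} (h : γ ∈ BnPos n)
    (hne : γ ≠ simpleRoot n j) : 0 < dotR (spAct (sref j) (rho2 n)) γ := by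
  rw [← dot_spAct (sref_sperm j), sref_sref]
  exact dot_rho2_pos (sref_pos h hne)

/-! ### Linear extensions -/

theorem isLinExt_iff {n : ℕ} {P : Set (Fin n → ℝ)} (hP : P ⊆ BnRoots n) (w : SIdx n ≃ SIdx n) :
    IsLinExt P w ↔ IsSPerm w ∧ ∀ α ∈ P, 0 < dotR (spAct w (rho2 n)) α := by
  constructor
  · rintro ⟨hw, h⟩
    refine ⟨hw, fun α hα => ?_⟩
    obtain ⟨β, hβ, rfl⟩ := h α hα
    rw [dot_spAct hw]; exact dot_rho2_pos hβ
  · rintro ⟨hw, h⟩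
    refine ⟨hw, fun α hα => ?_⟩
    obtain ⟨γ, hγ, rfl⟩ := exists_root hw (hP hα)
    refine ⟨γ, ?_, rfl⟩
    rcases pos_or_neg hγ with h1 | h1
    · exact h1
    · have h2 := dot_rho2_pos h1
      have h3 := h _ hα
      rw [dot_spAct hw] at h3
      rw [dotR_neg] at h2
      linarith

theorem spAct_inj {n : ℕ} {w : SIdx n ≃ SIdx n} (hw : IsSPerm w) {x y : Fin n → ℝ}
    (h : spAct w x = spAct w y) : x = y := by
  have := spAct_symm hw.symm' x
  rw [← this, ← spAct_symm hw.symm' y]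
  simp only [Equiv.symm_symm]
  rw [h]

/-- multiplying by a simple reflection keeps linear extensions if the root is not in `P` -/
theorem linExt_sref {n : ℕ} {P : Set (Fin n → ℝ)} {w : SIdx n ≃ SIdx n}
    (hw : IsLinExt P w) (j : Fin n) (hj : spAct w (simpleRoot n j) ∉ P) :
    IsLinExt P ((sref j).trans w) := by
  refine ⟨(sref_sperm j).trans' hw.1, fun α hα => ?_⟩
  obtain ⟨β, hβ, rfl⟩ := hw.2 α hα
  refine ⟨spAct (sref j) β, sref_pos hβ ?_, ?_⟩
  · rintro rfl; exact hj hα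
  · rw [spAct_trans _ _ hw.1, sref_sref]

/-! ### Sign-matching sums -/

/-- one factor -/
def fac (a b : ℝ) : ℝ := if 0 < a * b then SignType.sign a else 0

theorem fac_congr {a a' : ℝ} (h : SignType.sign a = SignType.sign a') (b : ℝ) :
    fac a b = fac a' b := by
  unfold fac
  have : 0 < a * b ↔ 0 < a' * b := by
    rw [← sign_eq_one_iff, ← sign_eq_one_iff, sign_mul, sign_mul, h]
  simp only [this, h]

theorem fac_sub {a b : ℝ} (hb : b ≠ 0) : fac a b - fac (-a) b = SignType.sign a := by
  unfold fac
  rcases lt_trichotomy a 0 with ha | ha | ha <;> rcases lt_or_gt_of_ne hb with hb | hb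
  · have h1 : 0 < a * b := mul_pos_of_neg_of_neg ha hb
    have h2 : ¬ 0 < -a * b := by rw [neg_mul]; linarith
    rw [if_pos h1, if_neg h2, sub_zero]
  · have h1 : a * b < 0 := mul_neg_of_neg_of_pos ha hb
    have h2 : 0 < -a * b := by rw [neg_mul]; linarith
    have h3 : ¬ 0 < a * b := by linarith
    rw [if_pos h2, if_neg h3]; simp [ha]
  · simp [ha]
  · simp [ha]
  · have h1 : a * b < 0 := mul_neg_of_pos_of_neg ha hb
    have h2 : 0 < -a * b := by rw [neg_mul]; linarith
    have h3 : ¬ 0 < a * b := by linarith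
    rw [if_pos h2, if_neg h3]; simp [ha]
  · have h1 : 0 < a * b := mul_pos ha hb
    have h2 : ¬ 0 < -a * b := by rw [neg_mul]; linarith
    rw [if_pos h1, if_neg h2, sub_zero]

/-- term of the sum -/
def tm {n : ℕ} (z u : Fin n → ℝ) (w : SIdx n ≃ SIdx n) : ℝ :=
  ∏ i, fac (dotR z (spAct w (simpleRoot n i))) (dotR u (spAct w (fund n i)))

/-- sign-matching sum -/
def sm {n : ℕ} (P : Set (Fin n → ℝ)) (z u : Fin n → ℝ) : ℝ := ∑ w ∈ linExts n P, tm z u w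

/-- genericity -/
def gen {n : ℕ} (u : Fin n → ℝ) : Prop :=
  ∀ w : SIdx n ≃ SIdx n, IsSPerm w → ∀ i, dotR u (spAct w (fund n i)) ≠ 0

theorem sign_add_of_eq {a b : ℝ} (h : SignType.sign a = SignType.sign b) :
    SignType.sign (a + b) = SignType.sign a := by
  rcases lt_trichotomy a 0 with ha | ha | ha <;> rcases lt_trichotomy b 0 with hb | hb | hb <;>
    simp_all [sign_neg, sign_pos, add_pos, add_neg]

/-- away from the wall, signs agree -/
theorem sign_same {n : ℕ} {v : SIdx n ≃ SIdx n} (hv : IsSPerm v) (i : Fin n) {γ : Fin n → ℝ}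
    (hγ : γ ∈ BnRoots n) (h1 : γ ≠ spAct v (simpleRoot n i)) (h2 : γ ≠ - spAct v (simpleRoot n i)) :
    SignType.sign (dotR (spAct v (rho2 n)) γ) =
      SignType.sign (dotR (spAct ((sref i).trans v) (rho2 n)) γ) := by
  obtain ⟨δ, hδ, rfl⟩ := exists_root hv hγ
  rw [spAct_trans _ _ hv, dot_spAct hv, dot_spAct hv]
  rcases pos_or_neg hδ with h | h
  · rw [sign_pos (dot_rho2_pos h), sign_pos (dot_sref_rho_pos h _)]
    rintro rfl; exact h1 rfl
  · have h3 := dot_rho2_pos h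
    have h4 := dot_sref_rho_pos (j := i) h (by
      intro h'; apply h2; rw [← h', spAct_neg, neg_neg])
    rw [dotR_neg] at h3 h4
    rw [sign_neg (by linarith), sign_neg (by linarith)]

theorem simple_mem_roots {n : ℕ} {w : SIdx n ≃ SIdx n} (hw : IsSPerm w) (i : Fin n) :
    spAct w (simpleRoot n i) ∈ BnRoots n :=
  spAct_mem_roots hw (pos_mem_roots (simple_mem_pos i))

theorem simple_unique {n : ℕ} {w : SIdx n ≃ SIdx n} (hw : IsSPerm w) {β : Fin n → ℝ} {j k : Fin n}
    (hj : spAct w (simpleRoot n j) = β ∨ spAct w (simpleRoot n j) = -β)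
    (hk : spAct w (simpleRoot n k) = β ∨ spAct w (simpleRoot n k) = -β) : j = k := by
  apply simple_inj
  rcases hj with hj | hj <;> rcases hk with hk | hk
  · left; apply spAct_inj hw; rw [hj, hk]
  · right; apply spAct_inj hw; rw [spAct_neg, hj, hk, neg_neg]
  · right; apply spAct_inj hw; rw [spAct_neg, hj, hk]
  · left; apply spAct_inj hw; rw [hj, hk]

theorem dot_cross {n : ℕ} {v : SIdx n ≃ SIdx n} (hv : IsSPerm v) (i : Fin n) :
    dotR (spAct ((sref i).trans v) (rho2 n)) (spAct v (simpleRoot n i)) =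
      - dotR (spAct v (rho2 n)) (spAct v (simpleRoot n i)) := by
  rw [spAct_trans _ _ hv, dot_spAct hv, dot_spAct hv, ← dot_spAct (sref_sperm i), sref_sref,
    sref_simple, dotR_neg]

theorem sref_trans_act {n : ℕ} {w : SIdx n ≃ SIdx n} (hw : IsSPerm w) (j : Fin n) :
    spAct ((sref j).trans w) (simpleRoot n j) = - spAct w (simpleRoot n j) := by
  rw [spAct_trans _ _ hw, sref_simple, spAct_neg]

theorem pair_cancel {n : ℕ} {v : SIdx n ≃ SIdx n} (hv : IsSPerm v) (i : Fin n)
    {u : Fin n → ℝ} (hu : gen u) {w : SIdx n ≃ SIdx n} (hw : IsSPerm w) (j : Fin n)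
    (hj : spAct w (simpleRoot n j) = spAct v (simpleRoot n i) ∨
      spAct w (simpleRoot n j) = - spAct v (simpleRoot n i)) :
    (tm (spAct v (rho2 n)) u w - tm (spAct ((sref i).trans v) (rho2 n)) u w) +
    (tm (spAct v (rho2 n)) u ((sref j).trans w) -
      tm (spAct ((sref i).trans v) (rho2 n)) u ((sref j).trans w)) = 0 := by
  have hcr := dot_cross hv i
  set β := spAct v (simpleRoot n i) with hβ
  set z := spAct v (rho2 n) with hz
  set z' := spAct ((sref i).trans v) (rho2 n) with hz'
  have hw' : IsSPerm ((sref j).trans w) := (sref_sperm j).trans' hw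
  have hA := sref_trans_act hw j
  have hj' : spAct ((sref j).trans w) (simpleRoot n j) = β ∨
      spAct ((sref j).trans w) (simpleRoot n j) = -β := by
    rw [hA]
    rcases hj with h | h <;> simp [h]
  have hsg : ∀ w : SIdx n ≃ SIdx n, IsSPerm w → (spAct w (simpleRoot n j) = β ∨
      spAct w (simpleRoot n j) = -β) → ∀ k, k ≠ j →
      SignType.sign (dotR z (spAct w (simpleRoot n k))) =
        SignType.sign (dotR z' (spAct w (simpleRoot n k))) := by
    intro w hw hj k hk
    refine sign_same hv i (simple_mem_roots hw k) ?_ ?_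
    · intro h; exact hk (simple_unique hw (Or.inl h) hj)
    · intro h; exact hk (simple_unique hw (Or.inr h) hj)
  have hm : dotR (z + z') (spAct w (simpleRoot n j)) = 0 := by
    rcases hj with h | h <;> rw [h]
    · rw [dotR_add_left, hcr]; ring
    · rw [dotR_neg, dotR_add_left, hcr]; ring
  have hcrw : ∀ γ, γ = β ∨ γ = -β → dotR z' γ = - dotR z γ := by
    rintro γ (rfl | rfl)
    · exact hcr
    · rw [dotR_neg, dotR_neg, hcr]
  have hsg2 : ∀ k, k ≠ j → SignType.sign (dotR z (spAct ((sref j).trans w) (simpleRoot n k))) =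
        SignType.sign (dotR z (spAct w (simpleRoot n k))) := by
    intro k hk
    rw [← sign_add_of_eq (hsg w hw hj k hk), ← sign_add_of_eq (hsg _ hw' hj' k hk),
      ← dotR_add_left, ← dotR_add_left, spAct_trans _ _ hw, spAct_sref, spAct_sub, spAct_smul,
      dotR_sub, dotR_smul, hm, mul_zero, sub_zero]
  have hfd : ∀ k, k ≠ j → spAct ((sref j).trans w) (fund n k) = spAct w (fund n k) := by
    intro k hk
    rw [spAct_trans _ _ hw, sref_fund hk]
  unfold tm
  set R := ∏ k ∈ Finset.univ.erase j,
    fac (dotR z (spAct w (simpleRoot n k))) (dotR u (spAct w (fund n k))) with hR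
  have e2 : ∏ k ∈ Finset.univ.erase j,
      fac (dotR z' (spAct w (simpleRoot n k))) (dotR u (spAct w (fund n k))) = R := by
    refine Finset.prod_congr rfl fun k hk => ?_
    have hk := Finset.ne_of_mem_erase hk
    exact fac_congr (hsg w hw hj k hk).symm _
  have e3 : ∏ k ∈ Finset.univ.erase j,
      fac (dotR z (spAct ((sref j).trans w) (simpleRoot n k)))
        (dotR u (spAct ((sref j).trans w) (fund n k))) = R := by
    refine Finset.prod_congr rfl fun k hk => ?_
    have hk := Finset.ne_of_mem_erase hk
    rw [hfd k hk]
    exact fac_congr (hsg2 k hk) _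
  have e4 : ∏ k ∈ Finset.univ.erase j,
      fac (dotR z' (spAct ((sref j).trans w) (simpleRoot n k)))
        (dotR u (spAct ((sref j).trans w) (fund n k))) = R := by
    rw [← e3]
    refine Finset.prod_congr rfl fun k hk => ?_
    have hk := Finset.ne_of_mem_erase hk
    exact fac_congr (hsg _ hw' hj' k hk).symm _
  rw [← Finset.mul_prod_erase _ _ (Finset.mem_univ j), ← Finset.mul_prod_erase _ _ (Finset.mem_univ j),
    ← Finset.mul_prod_erase _ _ (Finset.mem_univ j), ← Finset.mul_prod_erase _ _ (Finset.mem_univ j),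
    e2, e3, e4, ← hR, ← sub_mul, ← sub_mul, ← add_mul, hcrw _ hj, hcrw _ hj',
    fac_sub (hu w hw j), fac_sub (hu _ hw' j), hA, dotR_neg, Left.sign_neg]
  simp

theorem sm_cross {n : ℕ} {P : Set (Fin n → ℝ)} (hP : P ⊆ BnRoots n)
    {v : SIdx n ≃ SIdx n} (hv : IsLinExt P v) (i : Fin n)
    (hv' : IsLinExt P ((sref i).trans v)) {u : Fin n → ℝ} (hu : gen u) :
    sm P (spAct v (rho2 n)) u = sm P (spAct ((sref i).trans v) (rho2 n)) u := by
  have hcr := dot_cross hv.1 i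
  have hβ1 : spAct v (simpleRoot n i) ∉ P := by
    intro h
    have h1 := ((isLinExt_iff hP v).1 hv).2 _ h
    have h2 := ((isLinExt_iff hP _).1 hv').2 _ h
    linarith
  have hβ2 : -spAct v (simpleRoot n i) ∉ P := by
    intro h
    have h1 := ((isLinExt_iff hP v).1 hv).2 _ h
    have h2 := ((isLinExt_iff hP _).1 hv').2 _ h
    rw [dotR_neg] at h1 h2
    linarith
  rw [← sub_eq_zero]
  unfold sm
  rw [← Finset.sum_sub_distrib]
  let Q : (SIdx n ≃ SIdx n) → Fin n → Prop := fun w j =>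
    spAct w (simpleRoot n j) = spAct v (simpleRoot n i) ∨
      spAct w (simpleRoot n j) = - spAct v (simpleRoot n i)
  let g : (SIdx n ≃ SIdx n) → (SIdx n ≃ SIdx n) := fun w =>
    if h : ∃ j, Q w j then (sref h.choose).trans w else w
  have hg : ∀ w, IsSPerm w → ∀ j, Q w j → g w = (sref j).trans w := by
    intro w hw j hj
    have h : ∃ j, Q w j := ⟨j, hj⟩
    have : h.choose = j := simple_unique hw h.choose_spec hj
    simp only [g, dif_pos h, this]
  have hQ : ∀ w, IsSPerm w → ∀ j, Q w j → Q ((sref j).trans w) j := by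
    intro w hw j hj
    simp only [Q] at hj ⊢
    rw [sref_trans_act hw]
    rcases hj with h | h <;> simp [h]
  have hz : ∀ w, IsSPerm w → (¬ ∃ j, Q w j) →
      tm (spAct v (rho2 n)) u w - tm (spAct ((sref i).trans v) (rho2 n)) u w = 0 := by
    intro w hw h
    rw [sub_eq_zero]
    unfold tm
    refine Finset.prod_congr rfl fun k _ => fac_congr ?_ _
    refine sign_same hv.1 i (simple_mem_roots hw k) ?_ ?_
    · intro h'; exact h ⟨k, Or.inl h'⟩
    · intro h'; exact h ⟨k, Or.inr h'⟩
  have hmem : ∀ w, w ∈ linExts n P ↔ IsLinExt P w := by intro w; simp [linExts]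
  refine Finset.sum_involution (fun w _ => g w) ?_ ?_ ?_ ?_
  · intro w hw
    have hw := (hmem w).1 hw
    by_cases h : ∃ j, Q w j
    · obtain ⟨j, hj⟩ := h
      rw [hg w hw.1 j hj]
      exact pair_cancel hv.1 i hu hw.1 j hj
    · have : g w = w := by simp only [g, dif_neg h]
      rw [this, hz w hw.1 h]; simp
  · intro w hw hne heq
    have hw := (hmem w).1 hw
    by_cases h : ∃ j, Q w j
    · obtain ⟨j, hj⟩ := h
      rw [hg w hw.1 j hj] at heq
      have h1 := sref_trans_act hw.1 j
      rw [heq] at h1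
      have h2 : dotR (spAct w (fund n j)) (spAct w (simpleRoot n j)) =
        dotR (spAct w (fund n j)) (- spAct w (simpleRoot n j)) := congrArg _ h1
      rw [dotR_neg, dot_spAct hw.1, dot_fund_simple] at h2
      norm_num at h2
    · exact hne (hz w hw.1 h)
  · intro w hw
    have hw := (hmem w).1 hw
    rw [hmem]
    by_cases h : ∃ j, Q w j
    · obtain ⟨j, hj⟩ := h
      rw [hg w hw.1 j hj]
      apply linExt_sref hw
      rcases hj with h | h <;> rw [h] <;> assumption
    · simpa only [g, dif_neg h] using hw
  · intro w hw
    have hw := (hmem w).1 hw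
    by_cases h : ∃ j, Q w j
    · obtain ⟨j, hj⟩ := h
      rw [hg w hw.1 j hj, hg _ ((sref_sperm j).trans' hw.1) j (hQ w hw.1 j hj)]
      ext1 a
      simp [sref_apply, srefFun_invol j a]
    · have : g w = w := by simp only [g, dif_neg h]
      rw [this, this]

/-- a maximizing signed permutation is dominant -/
theorem dot_sref_rho {n : ℕ} {v : SIdx n ≃ SIdx n} (hv : IsSPerm v) (i : Fin n) (f : Fin n → ℝ) :
    dotR f (spAct ((sref i).trans v) (rho2 n)) =
      dotR f (spAct v (rho2 n)) - 2 * dotR f (spAct v (simpleRoot n i)) := by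
  rw [spAct_trans _ _ hv, sref_rho, spAct_sub, spAct_smul, dotR_sub, dotR_smul]

theorem dominant_nonneg {n : ℕ} {v : SIdx n ≃ SIdx n} (f : Fin n → ℝ)
    (h : ∀ i, 0 ≤ dotR f (spAct v (simpleRoot n i))) {γ : Fin n → ℝ} (hγ : γ ∈ BnPos n) :
    0 ≤ dotR f (spAct v γ) := by
  rw [expand_simple γ, spAct_sum, dotR_sum]
  refine Finset.sum_nonneg fun i _ => ?_
  rw [spAct_smul, dotR_smul]
  exact mul_nonneg (dot_fund_nonneg hγ i) (h i)

theorem exists_dominant {n : ℕ} {P : Set (Fin n → ℝ)} (hP : P ⊆ BnRoots n) (x : Fin n → ℝ)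
    (hx : ∀ α ∈ P, 0 < dotR x α) :
    ∃ v, IsLinExt P v ∧ ∀ i, 0 ≤ dotR x (spAct v (simpleRoot n i)) := by
  let A : Finset (SIdx n ≃ SIdx n) := Finset.univ.filter IsSPerm
  have hA : A.Nonempty := ⟨Equiv.refl _, by simp [A, IsSPerm]⟩
  obtain ⟨v, hvA, hmax⟩ := A.exists_max_image (fun v => dotR x (spAct v (rho2 n))) hA
  have hv : IsSPerm v := by simpa [A] using hvA
  have hdom : ∀ i, 0 ≤ dotR x (spAct v (simpleRoot n i)) := by
    intro i
    have := hmax ((sref i).trans v) (by simpa [A] using (sref_sperm i).trans' hv)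
    rw [dot_sref_rho hv] at this
    linarith
  refine ⟨v, ⟨hv, fun α hα => ?_⟩, hdom⟩
  obtain ⟨γ, hγ, rfl⟩ := exists_root hv (hP hα)
  refine ⟨γ, ?_, rfl⟩
  rcases pos_or_neg hγ with h1 | h1
  · exact h1
  · have h2 := dominant_nonneg x hdom h1
    rw [spAct_neg, dotR_neg] at h2
    have := hx _ hα
    linarith

/-- sign of `x` on simple roots agrees with that of `vρ` -/
theorem sm_eq_rho {n : ℕ} {P : Set (Fin n → ℝ)} (x : Fin n → ℝ)
    (hx' : ∀ w ∈ linExts n P, ∀ i : Fin n, dotR x (spAct w (simpleRoot n i)) ≠ 0)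
    {v : SIdx n ≃ SIdx n} (hv : IsSPerm v)
    (hdom : ∀ i, 0 ≤ dotR x (spAct v (simpleRoot n i))) (u : Fin n → ℝ) :
    sm P x u = sm P (spAct v (rho2 n)) u := by
  unfold sm tm
  refine Finset.sum_congr rfl fun w hw => Finset.prod_congr rfl fun i _ => fac_congr ?_ _
  have hne := hx' w hw i
  have hw : IsLinExt P w := by simpa [linExts] using hw
  obtain ⟨γ, hγ, he⟩ := exists_root hv (simple_mem_roots hw.1 i)
  rw [he] at hne ⊢
  rw [dot_spAct hv]
  rcases pos_or_neg hγ with h1 | h1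
  · have h2 := dominant_nonneg x hdom h1
    rw [sign_pos (dot_rho2_pos h1), sign_pos (lt_of_le_of_ne h2 (Ne.symm hne))]
  · have h2 := dominant_nonneg x hdom h1
    have h3 := dot_rho2_pos h1
    rw [dotR_neg] at h3
    rw [spAct_neg, dotR_neg] at h2
    rw [sign_neg (show dotR (rho2 n) γ < 0 by linarith),
      sign_neg (lt_of_le_of_ne (by linarith) hne)]

theorem sm_eq_zero {n : ℕ} {P : Set (Fin n → ℝ)} (hP : P ⊆ BnRoots n)
    {v : SIdx n ≃ SIdx n} (hv : IsLinExt P v) {u : Fin n → ℝ} (hu : gen u) (f : Fin n → ℝ)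
    (hf : ∀ α ∈ P, 0 < dotR f α) (hfu : dotR f u < 0) :
    sm P (spAct v (rho2 n)) u = 0 := by
  let A : Finset (SIdx n ≃ SIdx n) := (linExts n P).filter
    (fun v' => sm P (spAct v' (rho2 n)) u = sm P (spAct v (rho2 n)) u)
  have hmemA : ∀ v', v' ∈ A ↔ IsLinExt P v' ∧
      sm P (spAct v' (rho2 n)) u = sm P (spAct v (rho2 n)) u := by
    intro v'; simp [A, linExts]
  have hA : A.Nonempty := ⟨v, (hmemA v).2 ⟨hv, rfl⟩⟩
  obtain ⟨v1, hv1, hmax⟩ := A.exists_max_image (fun v => dotR f (spAct v (rho2 n))) hA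
  obtain ⟨hv1, hs⟩ := (hmemA v1).1 hv1
  have hdom : ∀ i, 0 ≤ dotR f (spAct v1 (simpleRoot n i)) := by
    intro i
    by_contra hneg
    push Not at hneg
    have hv2 : IsLinExt P ((sref i).trans v1) := by
      apply linExt_sref hv1
      intro h
      have := hf _ h
      linarith
    have := hmax _ ((hmemA _).2 ⟨hv2, by rw [← hs, sm_cross hP hv1 i hv2 hu]⟩)
    rw [dot_sref_rho hv1.1] at this
    linarith
  rw [← hs]
  unfold sm
  refine Finset.sum_eq_zero fun w hw => ?_
  have hw : IsLinExt P w := by simpa [linExts] using hw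
  by_contra hne
  unfold tm at hne
  replace hne := Finset.prod_ne_zero_iff.1 hne
  have hnn : 0 ≤ dotR f u := by
    rw [dot_expand hw.1]
    refine Finset.sum_nonneg fun i _ => ?_
    have h0 := hne i (Finset.mem_univ i)
    unfold fac at h0
    have hpos : 0 < dotR (spAct v1 (rho2 n)) (spAct w (simpleRoot n i)) *
        dotR u (spAct w (fund n i)) := by
      by_contra h; exact h0 (if_neg h)
    obtain ⟨γ, hγ, he⟩ := exists_root hv1.1 (simple_mem_roots hw.1 i)
    rw [he] at hpos ⊢
    rw [dot_spAct hv1.1] at hpos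
    rcases pos_or_neg hγ with h1 | h1
    · have h2 := dominant_nonneg f hdom h1
      have h3 := dot_rho2_pos h1
      have h4 := pos_of_mul_pos_right hpos h3.le
      positivity
    · have h2 := dominant_nonneg f hdom h1
      have h3 := dot_rho2_pos h1
      rw [dotR_neg] at h3
      rw [spAct_neg, dotR_neg] at h2
      have h4 : dotR u (spAct w (fund n i)) < 0 := by
        by_contra h
        push Not at h
        nlinarith
      nlinarith
  linarith

/-- uniqueness of the chamber -/
theorem chamber_unique {n : ℕ} {v w : SIdx n ≃ SIdx n} (hv : IsSPerm v) (hw : IsSPerm w)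
    (h : ∀ i, 0 < dotR (spAct v (rho2 n)) (spAct w (simpleRoot n i))) : w = v := by
  set y : Fin n → ℝ := fun k => dotR (spAct v (rho2 n)) (vS (w (true, k))) with hy
  have hodd : ∀ k, ∃ m : ℤ, y k = 2 * m + 1 := by
    intro k
    obtain ⟨a, ha⟩ := v.surjective (w (true, k))
    simp only [hy]
    rw [← ha, dot_spAct_vS hv]
    obtain ⟨s, j⟩ := a
    cases s
    · refine ⟨-((n : ℤ) - j), ?_⟩
      simp only [rsgn, rho2]; push_cast; simp; ring
    · refine ⟨(n : ℤ) - j - 1, ?_⟩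
      simp only [rsgn, rho2]; push_cast; simp; ring
  have hwy : spAct v (rho2 n) = spAct w y := by
    have h1 := spAct_symm hw (spAct v (rho2 n))
    refine h1.symm.trans (congrArg (spAct w) (funext fun k => ?_))
    have h2 := dotR_stdB (spAct w.symm (spAct v (rho2 n))) k
    rw [← dot_spAct hw, h1, spAct_stdB] at h2
    exact h2.symm
  have hpos : ∀ i, 0 < dotR y (simpleRoot n i) := by
    intro i
    have := h i
    rwa [hwy, dot_spAct hw] at this
  have hd : ∀ i, 0 ≤ dotR (y - rho2 n) (simpleRoot n i) := by
    intro i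
    rw [dotR_sub_left]
    have h1 := hpos i
    rw [dot_simple] at h1 ⊢
    rw [dot_simple]
    by_cases hi : (i : ℕ) + 1 < n
    · simp only [hi, dite_true] at h1 ⊢
      obtain ⟨m, hm⟩ := hodd i
      obtain ⟨l, hl⟩ := hodd ⟨i + 1, hi⟩
      rw [hm, hl] at h1 ⊢
      have h2 : (0 : ℝ) < ((m - l : ℤ) : ℝ) := by push_cast; linarith
      have h3 : 1 ≤ m - l := by exact_mod_cast h2
      have h4 : (1 : ℝ) ≤ m - l := by exact_mod_cast h3
      simp only [rho2]; push_cast; linarith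
    · simp only [hi, dite_false] at h1 ⊢
      obtain ⟨m, hm⟩ := hodd i
      rw [hm] at h1 ⊢
      have h2 : (0 : ℝ) < ((2 * m + 1 : ℤ) : ℝ) := by push_cast; linarith
      have h3 : 0 ≤ m := by
        have : 0 < 2 * m + 1 := by exact_mod_cast h2
        omega
      have h4 : (0 : ℝ) ≤ m := by exact_mod_cast h3
      have h5 : (n : ℝ) = i + 1 := by
        have := i.2
        have : n = i + 1 := by omega
        exact_mod_cast this
      simp only [rho2]; rw [h5]; linarith
  set d := y - rho2 n with hdd
  have hrd : 0 ≤ dotR d (rho2 n) := by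
    have : rho2 n = ∑ i, rho2 n i • stdB n i := by
      ext k; simp [stdB, Pi.single_apply]
    rw [this, dotR_sum]
    refine Finset.sum_nonneg fun i _ => ?_
    rw [dotR_smul]
    refine mul_nonneg (rho2_pos i).le ?_
    have h1 : stdB n i ∈ BnPos n := Or.inr ⟨i, rfl⟩
    have := dominant_nonneg (v := Equiv.refl _) d (by simpa [spAct_refl] using hd) h1
    simpa [spAct_refl] using this
  have hnorm : dotR y y = dotR (rho2 n) (rho2 n) := by
    rw [← dot_spAct hw, ← hwy, dot_spAct hv]
  have hyd : y = rho2 n + d := by rw [hdd]; abel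
  rw [hyd, dotR_add, dotR_add_left, dotR_add_left, dotR_comm (rho2 n) d] at hnorm
  have hdz : dotR d d = 0 := by
    have : 0 ≤ dotR d d := Finset.sum_nonneg fun i _ => mul_self_nonneg _
    linarith
  have hd0 : d = 0 := by
    exact dotProduct_self_eq_zero.1 hdz
  rw [hd0, add_zero] at hyd
  have key : ∀ i, w (true, i) = v (true, i) := by
    intro i
    obtain ⟨a, ha⟩ := v.surjective (w (true, i))
    have h1 := dot_spAct_vS hv (rho2 n) a
    have h2 : y i = rsgn a.1 * rho2 n a.2 := by rw [← h1, ha]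
    rw [hyd] at h2
    rw [← ha]
    obtain ⟨s, j⟩ := a
    cases s
    · have := rho2_pos i
      have := rho2_pos j
      simp [rsgn] at h2
      linarith
    · simp [rsgn] at h2
      rw [rho2_inj h2]
  ext1 a
  obtain ⟨s, i⟩ := a
  cases s
  · have h1 := hw (true, i)
    have h2 := hv (true, i)
    rw [key i, ← h2] at h1
    simpa [negS] using h1
  · exact key i

theorem sm_eq_one {n : ℕ} {P : Set (Fin n → ℝ)}
    {v : SIdx n ≃ SIdx n} (hv : IsLinExt P v) {u : Fin n → ℝ}
    (hu : ∀ w, IsLinExt P w → ∀ i, 0 < dotR u (spAct w (fund n i))) :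
    sm P (spAct v (rho2 n)) u = 1 := by
  unfold sm
  rw [Finset.sum_eq_single v]
  · unfold tm
    refine Finset.prod_eq_one fun i _ => ?_
    have h1 : 0 < dotR (spAct v (rho2 n)) (spAct v (simpleRoot n i)) := by
      rw [dot_spAct hv.1]; exact dot_rho2_pos (simple_mem_pos i)
    unfold fac
    rw [if_pos (mul_pos h1 (hu v hv i)), sign_pos h1]; simp
  · intro w hw hne
    have hw : IsLinExt P w := by simpa [linExts] using hw
    by_contra h
    unfold tm at h
    replace h := Finset.prod_ne_zero_iff.1 h
    apply hne
    apply chamber_unique hv.1 hw.1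
    intro i
    have h0 := h i (Finset.mem_univ i)
    have hpos : 0 < dotR (spAct v (rho2 n)) (spAct w (simpleRoot n i)) *
        dotR u (spAct w (fund n i)) := by
      by_contra h'; exact h0 (if_neg h')
    exact pos_of_mul_pos_left hpos (hu w hw i).le
  · intro h; exact absurd (by simpa [linExts] using hv) h

theorem nnSpan_of_mem {n : ℕ} {P : Set (Fin n → ℝ)} {α : Fin n → ℝ} (h : α ∈ P) :
    α ∈ nnSpan P :=
  ⟨1, fun _ => 1, fun _ => α, fun _ => zero_le_one, fun _ => h, by simp⟩

theorem nnSpan_zero {n : ℕ} (P : Set (Fin n → ℝ)) : (0 : Fin n → ℝ) ∈ nnSpan P :=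
  ⟨0, fun _ => 0, fun _ => 0, fun m => m.elim0, fun m => m.elim0, by simp⟩

theorem nnSpan_smul {n : ℕ} {P : Set (Fin n → ℝ)} {y : Fin n → ℝ} (h : y ∈ nnSpan P)
    {t : ℝ} (ht : 0 ≤ t) : t • y ∈ nnSpan P := by
  obtain ⟨r, c, β, hc, hβ, rfl⟩ := h
  exact ⟨r, fun m => t * c m, β, fun m => mul_nonneg ht (hc m), hβ, by
    rw [Finset.smul_sum]; simp only [mul_smul]⟩

theorem nnSpan_add {n : ℕ} {P : Set (Fin n → ℝ)} {y z : Fin n → ℝ} (hy : y ∈ nnSpan P)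
    (hz : z ∈ nnSpan P) : y + z ∈ nnSpan P := by
  obtain ⟨r, c, β, hc, hβ, rfl⟩ := hy
  obtain ⟨r', c', β', hc', hβ', rfl⟩ := hz
  refine ⟨r + r', Fin.append c c', Fin.append β β', fun m => ?_, fun m => ?_, ?_⟩
  · refine Fin.addCases (fun i => ?_) (fun i => ?_) m
    · simpa using hc i
    · simpa using hc' i
  · refine Fin.addCases (fun i => ?_) (fun i => ?_) m
    · simpa using hβ i
    · simpa using hβ' i
  · rw [Fin.sum_univ_add]; simp

theorem nnSpan_convex {n : ℕ} (P : Set (Fin n → ℝ)) : Convex ℝ (nnSpan P) := by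
  intro y hy z hz a b ha hb _
  exact nnSpan_add (nnSpan_smul hy ha) (nnSpan_smul hz hb)

theorem nnSpan_ae {n : ℕ} (P : Set (Fin n → ℝ)) :
    (nnSpan P : Set (Fin n → ℝ)) =ᵐ[volume] closure (nnSpan P) := by
  have h := (nnSpan_convex P).addHaar_frontier (volume : Measure (Fin n → ℝ))
  refine HasSubset.Subset.eventuallyLE subset_closure |>.antisymm ?_
  rw [ae_le_set]
  refine measure_mono_null ?_ h
  exact Set.diff_subset_diff_right interior_subset

theorem dot_nonneg_nnSpan {n : ℕ} {P : Set (Fin n → ℝ)} {f : Fin n → ℝ}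
    (h : ∀ α ∈ P, 0 ≤ dotR f α) {u : Fin n → ℝ} (hu : u ∈ nnSpan P) : 0 ≤ dotR f u := by
  obtain ⟨r, c, β, hc, hβ, rfl⟩ := hu
  rw [dotR_sum]
  refine Finset.sum_nonneg fun m _ => ?_
  rw [dotR_smul]
  exact mul_nonneg (hc m) (h _ (hβ m))

theorem continuous_dotR {n : ℕ} (f : Fin n → ℝ) : Continuous (fun u => dotR f u) := by
  unfold dotR; fun_prop

theorem dot_nonneg_closure {n : ℕ} {P : Set (Fin n → ℝ)} {f : Fin n → ℝ}
    (h : ∀ α ∈ P, 0 ≤ dotR f α) {u : Fin n → ℝ} (hu : u ∈ closure (nnSpan P)) :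
    0 ≤ dotR f u := by
  have hcl : IsClosed {u : Fin n → ℝ | 0 ≤ dotR f u} :=
    isClosed_le continuous_const (continuous_dotR f)
  exact closure_minimal (fun y hy => dot_nonneg_nnSpan h hy) hcl hu

theorem sm_mem {n : ℕ} {P : Set (Fin n → ℝ)} (hP : P ⊆ BnRoots n)
    (x : Fin n → ℝ) (hx : ∀ α ∈ P, 0 < dotR x α)
    (hx' : ∀ w ∈ linExts n P, ∀ i : Fin n, dotR x (spAct w (simpleRoot n i)) ≠ 0)
    {u : Fin n → ℝ} (hu : gen u) (huK : u ∈ closure (nnSpan P)) : sm P x u = 1 := by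
  obtain ⟨v, hv, hdom⟩ := exists_dominant hP x hx
  rw [sm_eq_rho x hx' hv.1 hdom u]
  refine sm_eq_one hv fun w hw i => ?_
  refine lt_of_le_of_ne ?_ (Ne.symm (hu w hw.1 i))
  rw [dotR_comm]
  refine dot_nonneg_closure (fun α hα => ?_) huK
  obtain ⟨β, hβ, rfl⟩ := hw.2 α hα
  rw [dot_spAct hw.1, dotR_comm]
  exact dot_fund_nonneg hβ i

theorem exists_sep {n : ℕ} {P : Set (Fin n → ℝ)}
    (x : Fin n → ℝ) (hx : ∀ α ∈ P, 0 < dotR x α)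
    {u : Fin n → ℝ} (huK : u ∉ closure (nnSpan P)) :
    ∃ f : Fin n → ℝ, (∀ α ∈ P, 0 < dotR f α) ∧ dotR f u < 0 := by
  obtain ⟨g, c, hg, hc⟩ :=
    geometric_hahn_banach_closed_point (nnSpan_convex P).closure isClosed_closure huK
  have hc0 : 0 < c := by
    have := hg 0 (subset_closure (nnSpan_zero P))
    simpa using this
  have hgP : ∀ α ∈ P, g α ≤ 0 := by
    intro α hα
    by_contra hpos
    push Not at hpos
    have := hg _ (subset_closure (nnSpan_smul (nnSpan_of_mem hα) (t := c / g α) (by positivity)))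
    rw [map_smul, smul_eq_mul, div_mul_cancel₀ _ hpos.ne'] at this
    exact lt_irrefl _ this
  have hgd : ∀ y, g y = dotR (fun k => g (stdB n k)) y := by
    intro y
    have : y = ∑ i, y i • stdB n i := by
      ext k; simp [stdB, Pi.single_apply]
    conv_lhs => rw [this]
    rw [map_sum]
    unfold dotR
    refine Finset.sum_congr rfl fun i _ => ?_
    rw [map_smul, smul_eq_mul, mul_comm]
  set h : Fin n → ℝ := fun k => g (stdB n k)
  have hden : 0 < 2 * (|dotR x u| + 1) := by positivity
  set ε : ℝ := c / (2 * (|dotR x u| + 1)) with hε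
  have hε0 : 0 < ε := by positivity
  refine ⟨ε • x - h, fun α hα => ?_, ?_⟩
  · rw [dotR_sub_left, dotR_smul_left, ← hgd]
    have := mul_pos hε0 (hx α hα)
    have := hgP α hα
    linarith
  · rw [dotR_sub_left, dotR_smul_left, ← hgd]
    have h1 : ε * dotR x u ≤ ε * (2 * (|dotR x u| + 1)) := by
      apply mul_le_mul_of_nonneg_left _ hε0.le
      have := le_abs_self (dotR x u)
      have := abs_nonneg (dotR x u)
      linarith
    rw [hε, div_mul_cancel₀ _ hden.ne', ← hε] at h1
    linarith

theorem sm_not_mem {n : ℕ} {P : Set (Fin n → ℝ)} (hP : P ⊆ BnRoots n)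
    (x : Fin n → ℝ) (hx : ∀ α ∈ P, 0 < dotR x α)
    (hx' : ∀ w ∈ linExts n P, ∀ i : Fin n, dotR x (spAct w (simpleRoot n i)) ≠ 0)
    {u : Fin n → ℝ} (hu : gen u) (huK : u ∉ closure (nnSpan P)) : sm P x u = 0 := by
  obtain ⟨v, hv, hdom⟩ := exists_dominant hP x hx
  rw [sm_eq_rho x hx' hv.1 hdom u]
  obtain ⟨f, hf, hfu⟩ := exists_sep x hx huK
  exact sm_eq_zero hP hv hu f hf hfu

/-- the change of coordinates matrix -/
def wM {n : ℕ} (w : SIdx n ≃ SIdx n) : Matrix (Fin n) (Fin n) ℝ :=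
  Matrix.of fun i k => spAct w (fund n i) k

theorem det_fund (n : ℕ) : (Matrix.of (fund n)).det = 1 := by
  rw [Matrix.det_of_isLowerTriangular]
  · simp [fund]
  · intro i j hij
    have : i < j := hij
    simp [fund, this]

theorem det_wM {n : ℕ} {w : SIdx n ≃ SIdx n} (hw : IsSPerm w) : (wM w).det ^ 2 = 1 := by
  have h : wM w * (wM w).transpose = Matrix.of (fund n) * (Matrix.of (fund n)).transpose := by
    ext i j
    exact dot_spAct hw (fund n i) (fund n j)
  have h2 := congrArg Matrix.det h
  rw [Matrix.det_mul, Matrix.det_mul, Matrix.det_transpose, Matrix.det_transpose, det_fund] at h2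
  rw [sq, h2, one_mul]

/-- the change of coordinates -/
def wT {n : ℕ} (w : SIdx n ≃ SIdx n) (u : Fin n → ℝ) : Fin n → ℝ :=
  fun i => dotR u (spAct w (fund n i))

theorem wT_mp {n : ℕ} {w : SIdx n ≃ SIdx n} (hw : IsSPerm w) :
    MeasurePreserving (wT w) volume volume := by
  have he : wT w = Matrix.toLin' (wM w) := by
    ext u i
    rw [Matrix.toLin'_apply]
    unfold wT
    rw [dotR_comm]
    rfl
  have h1 := det_wM hw
  have h0 : (wM w).det ≠ 0 := by
    intro h; rw [h] at h1; norm_num at h1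
  have habs : |(wM w).det⁻¹| = 1 := by
    have h3 : |(wM w).det| = 1 := by
      rw [← Real.sqrt_sq_eq_abs, h1, Real.sqrt_one]
    rw [abs_inv, h3, inv_one]
  refine ⟨?_, ?_⟩
  · rw [he]; exact (LinearMap.continuous_of_finiteDimensional _).measurable
  · rw [he, Real.map_matrix_volume_pi_eq_smul_volume_pi h0, habs]; simp

theorem gen_ae (n : ℕ) : ∀ᵐ u : Fin n → ℝ, gen u := by
  unfold gen
  rw [ae_all_iff]
  intro w
  by_cases hw : IsSPerm w
  · simp only [hw, true_imp_iff]
    rw [ae_all_iff]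
    intro i
    have h0 : ∀ᵐ t : Fin n → ℝ, t i ≠ 0 := by
      rw [ae_iff]
      simp only [ne_eq, not_not]
      exact Measure.pi_hyperplane (fun _ : Fin n => (volume : Measure ℝ)) i 0
    exact (wT_mp hw).quasiMeasurePreserving.ae h0
  · simp [hw]

/-- one-dimensional factor -/
theorem fac_exp {c : ℝ} (hc : c ≠ 0) :
    Integrable (fun t => fac c t * Real.exp (-(t * c))) ∧
      ∫ t, fac c t * Real.exp (-(t * c)) = c⁻¹ := by
  rcases lt_or_gt_of_ne hc with hc | hc
  · have he : (fun t => fac c t * Real.exp (-(t * c))) =ᵐ[volume]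
        (Set.Iic 0).indicator (fun t => -Real.exp (-c * t)) := by
      have : ∀ᵐ t : ℝ, t ≠ 0 := by simp [ae_iff]
      filter_upwards [this] with t ht
      unfold fac
      rcases lt_or_gt_of_ne ht with h | h
      · rw [if_pos (mul_pos_of_neg_of_neg hc h), Set.indicator_of_mem (show t ∈ Set.Iic 0 from h.le),
          sign_neg hc]
        have : -(t * c) = -c * t := by ring
        rw [this]; simp
      · rw [if_neg (by nlinarith), Set.indicator_of_notMem (by simpa using h)]; simp
    have hc' : 0 < -c := by linarith
    refine ⟨?_, ?_⟩
    · rw [integrable_congr he, integrable_indicator_iff measurableSet_Iic]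
      exact (integrableOn_exp_mul_Iic hc' 0).neg
    · rw [integral_congr_ae he, integral_indicator measurableSet_Iic, integral_neg,
        integral_exp_mul_Iic hc']
      simp [neg_div, div_neg]
  · have he : (fun t => fac c t * Real.exp (-(t * c))) =
        (Set.Ioi 0).indicator (fun t => Real.exp (-c * t)) := by
      ext t
      unfold fac
      rcases le_or_gt t 0 with h | h
      · rw [if_neg (by nlinarith), Set.indicator_of_notMem (by simpa using h)]; simp
      · rw [if_pos (mul_pos hc h), Set.indicator_of_mem (show t ∈ Set.Ioi 0 from h),
          sign_pos hc]
        have : -(t * c) = -c * t := by ring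
        rw [this]; simp
    have hc' : -c < 0 := by linarith
    rw [he]
    refine ⟨?_, ?_⟩
    · rw [integrable_indicator_iff measurableSet_Ioi]
      exact integrableOn_exp_mul_Ioi hc' 0
    · rw [integral_indicator measurableSet_Ioi, integral_exp_mul_Ioi hc']
      simp [neg_div, div_neg]

theorem tm_exp {n : ℕ} {w : SIdx n ≃ SIdx n} (hw : IsSPerm w) (x : Fin n → ℝ)
    (hx : ∀ i : Fin n, dotR x (spAct w (simpleRoot n i)) ≠ 0) :
    Integrable (fun u => tm x u w * Real.exp (-dotR x u)) ∧
      ∫ u, tm x u w * Real.exp (-dotR x u) =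
        ∏ i : Fin n, (dotR x (spAct w (simpleRoot n i)))⁻¹ := by
  let H : (Fin n → ℝ) → ℝ := fun t => ∏ i, (fac (dotR x (spAct w (simpleRoot n i))) (t i) *
    Real.exp (-(t i * dotR x (spAct w (simpleRoot n i)))))
  have he : (fun u => tm x u w * Real.exp (-dotR x u)) = H ∘ wT w := by
    ext u
    simp only [H, Function.comp, wT, tm]
    rw [Finset.prod_mul_distrib, ← Real.exp_sum, Finset.sum_neg_distrib, ← dot_expand hw]
  have hH : Integrable H volume :=
    Integrable.fintype_prod (μ := fun _ : Fin n => (volume : Measure ℝ))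
      (f := fun i t => fac (dotR x (spAct w (simpleRoot n i))) t *
        Real.exp (-(t * dotR x (spAct w (simpleRoot n i))))) fun i => (fac_exp (hx i)).1
  have hmp := wT_mp hw
  rw [he]
  refine ⟨hmp.integrable_comp_of_integrable hH, ?_⟩
  have h1 : ∫ u, (H ∘ wT w) u = ∫ t, H t := by
    have := integral_map (μ := volume) hmp.measurable.aemeasurable (f := H)
      (by rw [hmp.map_eq]; exact hH.aestronglyMeasurable)
    rw [hmp.map_eq] at this
    exact this.symm
  rw [h1]
  simp only [H]
  rw [integral_fintype_prod_volume_eq_prod (fun i t => fac (dotR x (spAct w (simpleRoot n i))) t *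
        Real.exp (-(t * dotR x (spAct w (simpleRoot n i)))))]
  exact Finset.prod_congr rfl fun i _ => (fac_exp (hx i)).2

theorem statement_2 (n : ℕ) (hn : 1 ≤ n) (P : Set (Fin n → ℝ)) (hP : IsSignedPoset n P)
    (x : Fin n → ℝ) (hx : ∀ α ∈ P, 0 < dotR x α)
    (hx' : ∀ w ∈ linExts n P, ∀ i : Fin n, dotR x (spAct w (simpleRoot n i)) ≠ 0) :
    IntegrableOn (fun u => Real.exp (-dotR x u)) (rootCone P) volume ∧
    ∫ u in rootCone P, Real.exp (-dotR x u) =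
      ∑ w ∈ linExts n P, ∏ i : Fin n, (dotR x (spAct w (simpleRoot n i)))⁻¹ := by
  have hL : ∀ w ∈ linExts n P, IsSPerm w := by
    intro w hw
    have : IsLinExt P w := by simpa [linExts] using hw
    exact this.1
  have hae : (closure (nnSpan P)).indicator (fun u => Real.exp (-dotR x u)) =ᵐ[volume]
      fun u => ∑ w ∈ linExts n P, tm x u w * Real.exp (-dotR x u) := by
    filter_upwards [gen_ae n] with u hu
    rw [← Finset.sum_mul]
    change _ = sm P x u * _
    by_cases huK : u ∈ closure (nnSpan P)
    · rw [Set.indicator_of_mem huK, sm_mem hP.1 x hx hx' hu huK, one_mul]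
    · rw [Set.indicator_of_notMem huK, sm_not_mem hP.1 x hx hx' hu huK, zero_mul]
  have hms : MeasurableSet (closure (nnSpan P)) := isClosed_closure.measurableSet
  have hIntOn : IntegrableOn (fun u => Real.exp (-dotR x u)) (closure (nnSpan P)) volume := by
    rw [← integrable_indicator_iff hms, integrable_congr hae]
    exact integrable_finset_sum _ fun w hw => (tm_exp (hL w hw) x (hx' w hw)).1
  refine ⟨hIntOn.mono_set subset_closure, ?_⟩
  unfold rootCone
  rw [setIntegral_congr_set (nnSpan_ae P), ← integral_indicator hms, integral_congr_ae hae,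
    integral_finset_sum _ fun w hw => (tm_exp (hL w hw) x (hx' w hw)).1]
  exact Finset.sum_congr rfl fun w hw => (tm_exp (hL w hw) x (hx' w hw)).2
end
end
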